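/- arXiv:1404.1056 — 7 statements merged into one kernel-verified Lean document; each statement's English description precedes it below -/
import Mathlib

section
/- For every integer k ≥ 4 and every deterministic online algorithm A for bin packing with cardinality constraint k, there exists an input list L such that A(L) ≥ 2·OPT(L). In particular, the absolute competitive ratio of every such online algorithm is at least 2. -/
/-!
The adversary first sends `k` tiny items of size `ε = 1 / (20 k)`, for which `OPT = 1`; an algorithm
using two or more bins on them has already lost. Otherwise all tiny items share one bin, which is
then full by cardinality. Two items of size `2/5` follow; they cannot enter the full bin.

* If they are packed together, two items of size `11/20` follow. Neither fits on top of the two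
  items of size `2/5`, and the two do not fit together, so four bins are used.
* If they are packed separately, one item of size `13/20` follows. It fits with neither of them, so
  again four bins are used.

In both cases two bins suffice offline: pair each `2/5` with an `11/20`, respectively put the two
`2/5` together and the `13/20` apart, and give two tiny items to one bin and `k - 2` to the other.
The tiny items have total size `1/20`, and `k ≥ 4` makes the cardinalities fit (`two_bins`).
-/

open scoped Classical
noncomputable section

/-- An input is a list of item sizes, each in (0,1]. -/
def ValidInput (L : List ℝ) : Prop := ∀ x ∈ L, 0 < x ∧ x ≤ 1

/-- A packing assigns a bin index to each item; it is feasible for cardinality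
constraint `k` if every bin receives at most `k` items of total size at most 1. -/
def IsFeasible (k : ℕ) (L : List ℝ) (f : Fin L.length → ℕ) : Prop :=
  ∀ b : ℕ,
    (Finset.univ.filter (fun i => f i = b)).card ≤ k ∧
    ∑ i ∈ Finset.univ.filter (fun i => f i = b), L.get i ≤ 1

/-- The number of bins used by a packing. -/
def binsUsed (L : List ℝ) (f : Fin L.length → ℕ) : ℕ :=
  (Finset.univ.image f).card

/-- The optimal (minimum) number of bins in a feasible packing of `L`. -/
def OPT (k : ℕ) (L : List ℝ) : ℕ :=
  sInf {n | ∃ f : Fin L.length → ℕ, IsFeasible k L f ∧ binsUsed L f = n}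

/-- A deterministic online algorithm is a strategy: given the items seen so far
(ending with the item to be packed), it returns the bin index for that item. -/
def onlinePacking (A : List ℝ → ℕ) (L : List ℝ) : Fin L.length → ℕ :=
  fun i => A (L.take (i.1 + 1))

/-- The strategy `A` is a valid online algorithm for cardinality constraint `k`
if on every valid input the induced packing is feasible. -/
def OnlineValid (k : ℕ) (A : List ℝ → ℕ) : Prop :=
  ∀ L : List ℝ, ValidInput L → IsFeasible k L (onlinePacking A L)

/-- The number of bins used by online algorithm `A` on input `L`. -/
def onlineBins (A : List ℝ → ℕ) (L : List ℝ) : ℕ :=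
  binsUsed L (onlinePacking A L)

/-- The state of First Fit: a list of open bins (in order of opening),
each recorded as (number of items, total size). `ffFind` returns the index of
the first bin that can receive an item of size `x` (it has at most `k-1` items
and the item fits); if none, the index of a new bin. -/
def ffFind (k : ℕ) (x : ℝ) : List (ℕ × ℝ) → ℕ
  | [] => 0
  | b :: bs => if b.1 < k ∧ b.2 + x ≤ 1 then 0 else ffFind k x bs + 1

/-- Update the First Fit state after packing an item of size `x`. -/
def ffUpdate (k : ℕ) (x : ℝ) : List (ℕ × ℝ) → List (ℕ × ℝ)
  | [] => [(1, x)]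
  | b :: bs =>
      if b.1 < k ∧ b.2 + x ≤ 1 then (b.1 + 1, b.2 + x) :: bs
      else b :: ffUpdate k x bs

/-- The final state of First Fit with cardinality constraint `k` on input `L`. -/
def ffState (k : ℕ) (L : List ℝ) : List (ℕ × ℝ) :=
  L.foldl (fun bs x => ffUpdate k x bs) []

/-- The number of bins used by First Fit with cardinality constraint `k` on `L`. -/
def FF (k : ℕ) (L : List ℝ) : ℕ := (ffState k L).length

/-- The bin index into which First Fit packs the `i`-th item of `L`. -/
def ffAssign (k : ℕ) (L : List ℝ) (i : Fin L.length) : ℕ :=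
  ffFind k (L.get i) (ffState k (L.take i.1))

theorem OPT_le_of_feasible {k : ℕ} {L : List ℝ} {f : Fin L.length → ℕ} {m : ℕ}
    (hf : IsFeasible k L f) (hm : binsUsed L f ≤ m) : OPT k L ≤ m :=
  le_trans (Nat.sInf_le ⟨f, hf, rfl⟩) hm

theorem one_le_OPT {k : ℕ} {L : List ℝ} {f : Fin L.length → ℕ}
    (hf : IsFeasible k L f) (hL : 0 < L.length) : 1 ≤ OPT k L := by
  have hmem : OPT k L ∈ {n | ∃ f : Fin L.length → ℕ, IsFeasible k L f ∧ binsUsed L f = n} :=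
    Nat.sInf_mem ⟨_, f, hf, rfl⟩
  obtain ⟨g, -, hg⟩ := hmem
  rw [← hg]
  exact Finset.card_pos.2 ⟨g ⟨0, hL⟩, Finset.mem_image_of_mem _ (Finset.mem_univ _)⟩

/-- A set `S` of items that fits into one bin and whose complement fits into another
yields a packing with two bins. -/
theorem two_bins {k : ℕ} {L : List ℝ} (S : Finset (Fin L.length))
    (h1 : S.card ≤ k) (h2 : L.length ≤ k + S.card)
    (h3 : ∑ i ∈ S, L.get i ≤ 1) (h4 : L.sum ≤ 1 + ∑ i ∈ S, L.get i) : OPT k L ≤ 2 := by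
  have hc : Sᶜ.card + S.card = L.length := by simp [Finset.card_compl_add_card]
  have hs : ∑ i ∈ Sᶜ, L.get i + ∑ i ∈ S, L.get i = L.sum := by
    rw [Finset.sum_compl_add_sum]
    exact Fin.sum_univ_getElem L
  refine OPT_le_of_feasible (f := fun i => if i ∈ S then 0 else 1) ?_ ?_
  · intro b
    rcases b with _ | _ | b
    · have : (Finset.univ.filter fun i => (if i ∈ S then 0 else 1) = 0) = S := by
        ext i; by_cases h : i ∈ S <;> simp [h]
      rw [this]
      exact ⟨h1, h3⟩
    · have : (Finset.univ.filter fun i => (if i ∈ S then 0 else 1) = 0 + 1) = Sᶜ := by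
        ext i; by_cases h : i ∈ S <;> simp [h]
      rw [this]
      exact ⟨by omega, by linarith⟩
    · have : (Finset.univ.filter fun i => (if i ∈ S then 0 else 1) = b + 1 + 1) = ∅ := by
        ext i; by_cases h : i ∈ S <;> simp [h]
      rw [this]
      simp
  · have : Finset.univ.image (fun i => if i ∈ S then 0 else 1) ⊆ ({0, 1} : Finset ℕ) := by
      intro x hx
      obtain ⟨i, -, rfl⟩ := Finset.mem_image.1 hx
      by_cases h : i ∈ S <;> simp [h]
    exact (Finset.card_le_card this).trans (by simp)

/-- Feasibility restricted to an arbitrary set of items sharing a bin. -/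
theorem feasible_subset {k : ℕ} {L : List ℝ} {f : Fin L.length → ℕ} (hL : ValidInput L)
    (hf : IsFeasible k L f) (S : Finset (Fin L.length)) (b : ℕ) (hS : ∀ i ∈ S, f i = b) :
    S.card ≤ k ∧ ∑ i ∈ S, L.get i ≤ 1 := by
  have hsub : S ⊆ Finset.univ.filter (fun i => f i = b) := fun i hi => by simp [hS i hi]
  refine ⟨(Finset.card_le_card hsub).trans (hf b).1, le_trans ?_ (hf b).2⟩
  exact Finset.sum_le_sum_of_subset_of_nonneg hsub
    fun i _ _ => (hL _ (List.get_mem L i)).1.le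

/-- The bin that `A` chooses for the item at position `k + j`, after `k` tiny items of size `e`. -/
theorem onlinePacking_append {k : ℕ} {e : ℝ} {A : List ℝ → ℕ} {R : List ℝ} (j : ℕ)
    (h : k + j < (List.replicate k e ++ R).length) :
    onlinePacking A (List.replicate k e ++ R) ⟨k + j, h⟩ =
      A (List.replicate k e ++ R.take (j + 1)) := by
  have h1 : k + j + 1 - k = j + 1 := by omega
  have h2 : min (k + j + 1) k = k := by omega
  simp [onlinePacking, List.take_append, h1, h2]

theorem onlinePacking_tiny {k : ℕ} {e : ℝ} {A : List ℝ → ℕ} {R : List ℝ} (i : ℕ) (hi : i < k)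
    (h : i < (List.replicate k e ++ R).length) :
    onlinePacking A (List.replicate k e ++ R) ⟨i, h⟩ = A (List.replicate (i + 1) e) := by
  have : i + 1 - k = 0 := by omega
  simp [onlinePacking, List.take_append, this]
  congr 2
  omega

/-- A bin holding all `k` tiny items is full by cardinality, so later items avoid it. -/
theorem avoid_full {k : ℕ} {e : ℝ} {A : List ℝ → ℕ} {R : List ℝ} {b : ℕ}
    (hA : OnlineValid k A) (hv : ValidInput (List.replicate k e ++ R))
    (hb : ∀ i < k, A (List.replicate (i + 1) e) = b) (j : ℕ) (hj : j < R.length) :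
    A (List.replicate k e ++ R.take (j + 1)) ≠ b := by
  intro h
  have hlen : (List.replicate k e ++ R).length = k + R.length := by simp
  have hkj : k + j < (List.replicate k e ++ R).length := by omega
  -- The `k + 1` positions `0, …, k - 1, k + j` would all share the bin `b`.
  let g : Fin (k + 1) → Fin (List.replicate k e ++ R).length :=
    fun i => if hi : i.1 < k then ⟨i.1, by omega⟩ else ⟨k + j, hkj⟩
  have hg : Function.Injective g := by
    intro x y hxy
    simp only [g] at hxy
    split_ifs at hxy <;> simp [Fin.ext_iff] at hxy ⊢ <;> omega
  have := (feasible_subset hv (hA _ hv) (Finset.univ.image g) b (by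
    intro i hi
    obtain ⟨x, -, rfl⟩ := Finset.mem_image.1 hi
    by_cases hx : x.1 < k
    · simp only [g, hx, dif_pos]
      rw [onlinePacking_tiny _ hx]
      exact hb _ hx
    · simp only [g, hx, dif_neg, not_false_eq_true]
      rw [onlinePacking_append]
      exact h)).1
  rw [Finset.card_image_of_injective _ hg, Finset.card_univ, Fintype.card_fin] at this
  omega

/-- Items sent after the tiny ones that share a bin have total size at most `1`. -/
theorem share_le_one {k : ℕ} {e : ℝ} {A : List ℝ → ℕ} {R : List ℝ} {b : ℕ}
    (hA : OnlineValid k A) (hv : ValidInput (List.replicate k e ++ R))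
    (J : Finset (Fin R.length))
    (hJ : ∀ j ∈ J, A (List.replicate k e ++ R.take (j.1 + 1)) = b) :
    ∑ j ∈ J, R.get j ≤ 1 := by
  let g : Fin R.length → Fin (List.replicate k e ++ R).length :=
    fun j => ⟨k + j.1, by simp⟩
  have hg : Function.Injective g := by
    intro x y hxy
    simpa [g, Fin.ext_iff] using hxy
  have h := (feasible_subset hv (hA _ hv) (J.image g) b (by
    intro i hi
    obtain ⟨x, hx, rfl⟩ := Finset.mem_image.1 hi
    simp only [g]
    rw [onlinePacking_append]
    exact hJ x hx)).2
  rw [Finset.sum_image hg.injOn] at h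
  simpa [g] using h

theorem four_le_onlineBins {A : List ℝ → ℕ} {L : List ℝ} (i₁ i₂ i₃ i₄ : Fin L.length)
    (h : ({onlinePacking A L i₁, onlinePacking A L i₂, onlinePacking A L i₃,
      onlinePacking A L i₄} : Finset ℕ).card = 4) : 4 ≤ onlineBins A L := by
  rw [← h]
  unfold onlineBins binsUsed
  apply Finset.card_le_card
  intro x hx
  simp only [Finset.mem_insert, Finset.mem_singleton] at hx
  rcases hx with rfl | rfl | rfl | rfl <;> exact Finset.mem_image_of_mem _ (Finset.mem_univ _)

theorem card_four {a b c d : ℕ} (h1 : a ≠ b) (h2 : a ≠ c) (h3 : a ≠ d) (h4 : b ≠ c) (h5 : b ≠ d)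
    (h6 : c ≠ d) : ({a, b, c, d} : Finset ℕ).card = 4 := by
  simp [*]

/-- An input with offline cost at most `m` and online cost at least `2 m`
is a witness for the lower bound. -/
theorem witness {k : ℕ} {A : List ℝ → ℕ} (hA : OnlineValid k A) {L : List ℝ} (hv : ValidInput L)
    (hL : 0 < L.length) (m : ℕ) (h1 : OPT k L ≤ m) (h2 : 2 * m ≤ onlineBins A L) :
    ∃ L : List ℝ, ValidInput L ∧ 1 ≤ OPT k L ∧
      2 * (OPT k L : ℝ) ≤ (onlineBins A L : ℝ) := by
  refine ⟨L, hv, one_le_OPT (hA L hv) hL, ?_⟩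
  exact_mod_cast (by omega : 2 * OPT k L ≤ onlineBins A L)

/-- The `k` tiny items alone fit into one bin. -/
theorem OPT_tiny {k : ℕ} {e : ℝ} (he : k * e ≤ 1) : OPT k (List.replicate k e) ≤ 1 := by
  refine OPT_le_of_feasible (f := fun _ => 0) ?_ ?_
  · intro b
    by_cases hb : 0 = b
    · simp [hb, he]
    · simp [hb]
  · have : Finset.univ.image (fun _ : Fin (List.replicate k e).length => 0) ⊆ {0} := by
      intro x hx
      obtain ⟨i, -, rfl⟩ := Finset.mem_image.1 hx
      simp
    exact Finset.card_le_card this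

/-- For every k ≥ 4 and every deterministic online algorithm `A` for
bin packing with cardinality constraint `k`, there is an input `L` with
A(L) ≥ 2·OPT(L) (and OPT(L) ≥ 1), so the absolute competitive ratio of `A`
is at least 2. -/
theorem online_lb_two (k : ℕ) (hk : 4 ≤ k) (A : List ℝ → ℕ) (hA : OnlineValid k A) :
    ∃ L : List ℝ, ValidInput L ∧ 1 ≤ OPT k L ∧
      2 * (OPT k L : ℝ) ≤ (onlineBins A L : ℝ) := by
  have hk0 : (4 : ℝ) ≤ k := by exact_mod_cast hk
  obtain ⟨e, he0, hke⟩ : ∃ e : ℝ, 0 < e ∧ k * e = 1 / 20 :=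
    ⟨1 / (20 * k), by positivity, by field_simp⟩
  have he1 : e ≤ 1 / 80 := by nlinarith
  have hvalid : ∀ R : List ℝ, ValidInput R → ValidInput (List.replicate k e ++ R) := by
    intro R hR x hx
    rcases List.mem_append.1 hx with h | h
    · rw [List.eq_of_mem_replicate h]
      exact ⟨he0, by linarith⟩
    · exact hR x h
  have hvT : ValidInput (List.replicate k e) := by
    simpa using hvalid [] (by simp [ValidInput])
  by_cases hT : 2 ≤ onlineBins A (List.replicate k e)
  · exact witness hA hvT (by simp; omega) 1 (OPT_tiny (by linarith)) hT
  -- All tiny items share one bin.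
  have hb : ∀ i < k, A (List.replicate (i + 1) e) = A (List.replicate (0 + 1) e) := by
    intro i hi
    have hle : (Finset.univ.image (onlinePacking A (List.replicate k e))).card ≤ 1 := by
      unfold onlineBins binsUsed at hT
      omega
    have key := Finset.card_le_one.1 hle
    have hmem : ∀ j < k, A (List.replicate (j + 1) e) ∈
        Finset.univ.image (onlinePacking A (List.replicate k e)) := by
      intro j hj
      refine Finset.mem_image.2 ⟨⟨j, by simpa using hj⟩, Finset.mem_univ _, ?_⟩
      have : min (j + 1) k = j + 1 := by omega
      simp [onlinePacking, this]
    exact key _ (hmem i hi) _ (hmem 0 (by omega))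
  have d0 : 0 ≠ k := by omega
  have d1 : 1 ≠ k := by omega
  have h00 : 0 < k := by omega
  have h11 : 1 < k := by omega
  by_cases hpq : A (List.replicate k e ++ [2/5]) = A (List.replicate k e ++ [2/5, 2/5])
  · have hv : ValidInput (List.replicate k e ++ [2/5, 2/5, 11/20, 11/20]) :=
      hvalid _ (by intro x hx; simp at hx; rcases hx with rfl | rfl <;> norm_num)
    have hlen : (List.replicate k e ++ [2/5, 2/5, 11/20, 11/20]).length = k + 4 := by simp
    have n0 := avoid_full hA hv hb 0 (by simp)
    have n2 := avoid_full hA hv hb 2 (by simp)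
    have n3 := avoid_full hA hv hb 3 (by simp)
    -- The total sizes `2/5 + 2/5 + 11/20` and `11/20 + 11/20` exceed `1`.
    have s02 := share_le_one hA hv (b := A (List.replicate k e ++ [2/5])) {0, 1, 2}
    have s03 := share_le_one hA hv (b := A (List.replicate k e ++ [2/5])) {0, 1, 3}
    have s23 := share_le_one hA hv (b := A (List.replicate k e ++ [2/5, 2/5, 11/20])) {2, 3}
    simp [← hpq] at n0 n2 n3 s02 s03 s23
    norm_num at s02 s03 s23
    refine witness hA hv (by omega) 2 ?_ ?_
    · refine two_bins {⟨0, by omega⟩, ⟨1, by omega⟩, ⟨k, by omega⟩, ⟨k + 2, by omega⟩} ?_ ?_ ?_ ?_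
      all_goals simp [d0, d1, h00, h11]
      · exact hk
      · linarith
      · linarith
    · refine four_le_onlineBins ⟨0, by omega⟩ ⟨k + 0, by omega⟩ ⟨k + 2, by omega⟩ ⟨k + 3, by omega⟩ ?_
      rw [onlinePacking_append, onlinePacking_append, onlinePacking_append,
        onlinePacking_tiny _ (by omega)]
      apply card_four <;> simp <;> grind
  · have hv : ValidInput (List.replicate k e ++ [2/5, 2/5, 13/20]) :=
      hvalid _ (by intro x hx; simp at hx; rcases hx with rfl | rfl <;> norm_num)
    have hlen : (List.replicate k e ++ [2/5, 2/5, 13/20]).length = k + 3 := by simp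
    have n0 := avoid_full hA hv hb 0 (by simp)
    have n1 := avoid_full hA hv hb 1 (by simp)
    have n2 := avoid_full hA hv hb 2 (by simp)
    -- The total size `2/5 + 13/20` exceeds `1`.
    have s02 := share_le_one hA hv (b := A (List.replicate k e ++ [2/5])) {0, 2}
    have s12 := share_le_one hA hv (b := A (List.replicate k e ++ [2/5, 2/5])) {1, 2}
    simp at n0 n1 n2 s02 s12
    norm_num at s02 s12
    refine witness hA hv (by omega) 2 ?_ ?_
    · refine two_bins {⟨0, by omega⟩, ⟨1, by omega⟩, ⟨k, by omega⟩, ⟨k + 1, by omega⟩} ?_ ?_ ?_ ?_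
      all_goals simp [d0, d0.symm, d1, h00, h11]
      · exact hk
      · linarith
      · linarith
    · refine four_le_onlineBins ⟨0, by omega⟩ ⟨k + 0, by omega⟩ ⟨k + 1, by omega⟩ ⟨k + 2, by omega⟩ ?_
      rw [onlinePacking_append, onlinePacking_append, onlinePacking_append,
        onlinePacking_tiny _ (by omega)]
      apply card_four <;> simp <;> grind
end
end

section
/- For k = 3 and every deterministic online algorithm A for bin packing with cardinality constraint k, there exists an input list L such that A(L) ≥ (7/4)·OPT(L). In particular, the absolute competitive ratio of every such online algorithm is at least 7/4. -/
/-!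
The adversary presents tiny items, sizes written below in units of `1/1000`, followed by copies of
one large item of size `y > 500`.  Every branch of the algorithm's choices ends with at least
`7/4` times the optimum.

The items `10, 10, 10` must share a bin (otherwise `OPT = 1` and two bins are used), which is then
full.  Next come `21, 50`; if they are separated, one item `980` fits into no open bin, and four
bins are used against `OPT = 2`.  So `21, 50` share a bin, and `33` follows.  The next items depend
on where the algorithm puts it:

* `33` joins `21, 50`: present `100, 100`.
* `33` opens a bin: present `32`.  If it opens a bin too, two items `969` give six bins against
  `OPT = 3`.  If it joins `21, 50`, present `100`; if it joins `33`, present `33`.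

Now eight tiny items lie in three or four bins.  If they are in three bins, four large items
complementing the largest sum of a suitable perfect matching of the tiny items finish with seven
bins against `OPT = 4`: every open bin either has three items or has a larger sum than each
matched pair.  If they are in four bins, three large items do the same, three of the tiny items
being packed together by the optimum.

`large_phase` shows that large items blocked by all open bins each open a new bin, `opt_le` bounds
the optimum by an explicit packing, and `leaf` combines the two.
-/


open scoped Classical
noncomputable section

/-- The real input list whose sizes are given in units of `1/1000`. -/
def sz (P : List ℕ) : List ℝ := P.map (fun n : ℕ => (n : ℝ) / 1000)

/-- The bin into which `A` puts the item of index `j` (counted from `0`) of `P`. -/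
def bin (A : List ℝ → ℕ) (P : List ℕ) (j : ℕ) : ℕ := A (sz (P.take (j + 1)))

/-- The sizes in `P` lie in `(0, 1]` after scaling. -/
def Good (P : List ℕ) : Prop := ∀ n ∈ P, 0 < n ∧ n ≤ 1000

lemma sz_length (P : List ℕ) : (sz P).length = P.length := by simp [sz]

lemma valid_sz {P : List ℕ} (hP : Good P) : ValidInput (sz P) := by
  intro x hx
  obtain ⟨n, hn, rfl⟩ := List.mem_map.1 hx
  obtain ⟨h1, h2⟩ := hP n hn
  have h1' : (0 : ℝ) < n := by exact_mod_cast h1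
  have h2' : (n : ℝ) ≤ 1000 := by exact_mod_cast h2
  constructor
  · positivity
  · linarith

lemma sz_get (P : List ℕ) (i : Fin (sz P).length) :
    (sz P).get i = (P.getD i.1 0 : ℝ) / 1000 := by
  have h : i.1 < P.length := sz_length P ▸ i.2
  rw [List.getD_eq_getElem _ _ h]
  exact List.getElem_map (l := P) (fun n : ℕ => (n : ℝ) / 1000) (h := i.2)

lemma online_eq (A : List ℝ → ℕ) (P : List ℕ) (i : Fin (sz P).length) :
    onlinePacking A (sz P) i = bin A P i.1 := by
  simp [onlinePacking, bin, sz, List.map_take]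

lemma onlineBins_eq (A : List ℝ → ℕ) (P : List ℕ) :
    onlineBins A (sz P) = ((Finset.range P.length).image (bin A P)).card := by
  unfold onlineBins binsUsed
  congr 1
  ext v
  simp only [Finset.mem_image, Finset.mem_univ, true_and, Finset.mem_range, online_eq]
  constructor
  · rintro ⟨i, rfl⟩
    exact ⟨i.1, sz_length P ▸ i.2, rfl⟩
  · rintro ⟨i, hi, rfl⟩
    exact ⟨⟨i, by rwa [sz_length]⟩, rfl⟩

/-- Feasibility of the online packing: items sharing a bin number at most three and have total
size at most `1000`. -/
lemma pack {A : List ℝ → ℕ} (hA : OnlineValid 3 A) {P : List ℕ} (hP : Good P) (T : Finset ℕ)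
    (v : ℕ) (hT : ∀ j ∈ T, j < P.length ∧ bin A P j = v) :
    T.card ≤ 3 ∧ ∑ j ∈ T, P.getD j 0 ≤ 1000 := by
  obtain ⟨hc, hs⟩ := hA (sz P) (valid_sz hP) v
  have hinj : Set.InjOn (fun i : Fin (sz P).length => i.1)
      (Finset.univ.filter (fun i => onlinePacking A (sz P) i = v) :
        Finset (Fin (sz P).length)) := fun a _ b _ h => Fin.ext h
  have hsub : T ⊆ (Finset.univ.filter (fun i => onlinePacking A (sz P) i = v)).image
      (fun i : Fin (sz P).length => i.1) := by
    intro j hj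
    obtain ⟨h1, h2⟩ := hT j hj
    simp only [Finset.mem_image, Finset.mem_filter, Finset.mem_univ, true_and, online_eq]
    exact ⟨⟨j, by rwa [sz_length]⟩, h2, rfl⟩
  constructor
  · exact (Finset.card_le_card hsub).trans (Finset.card_image_le.trans hc)
  · have h1 := Finset.sum_le_sum_of_subset (f := fun j => P.getD j 0) hsub
    rw [Finset.sum_image hinj] at h1
    have h2 : (∑ j ∈ T, P.getD j 0 : ℕ) / (1000 : ℝ) ≤ 1 := by
      refine le_trans ?_ hs
      simp only [sz_get]
      rw [← Finset.sum_div]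
      gcongr
      exact_mod_cast h1
    rw [div_le_one (by norm_num)] at h2
    exact_mod_cast h2

/-- The explicit packing `g` (a list of bin indices below `opt`) bounds the optimum. -/
lemma opt_le (P g : List ℕ) (opt : ℕ) (hg : ∀ i < P.length, g.getD i 0 < opt)
    (h : ∀ b < opt, ((Finset.range P.length).filter (fun i => g.getD i 0 = b)).card ≤ 3 ∧
      ∑ i ∈ (Finset.range P.length).filter (fun i => g.getD i 0 = b), P.getD i 0 ≤ 1000) :
    OPT 3 (sz P) ≤ opt := by
  have hmap : ∀ b, ((Finset.univ : Finset (Fin (sz P).length)).filter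
      (fun i => g.getD i.1 0 = b)).image (fun i => i.1) =
      (Finset.range P.length).filter (fun i => g.getD i 0 = b) := by
    intro b
    ext j
    simp only [Finset.mem_image, Finset.mem_filter, Finset.mem_univ, true_and, Finset.mem_range]
    constructor
    · rintro ⟨i, hi, rfl⟩
      exact ⟨sz_length P ▸ i.2, hi⟩
    · rintro ⟨hj, hb⟩
      exact ⟨⟨j, by rwa [sz_length]⟩, hb, rfl⟩
  have hfeas : IsFeasible 3 (sz P) (fun i => g.getD i.1 0) := by
    intro b
    by_cases hb : b < opt
    · obtain ⟨h1, h2⟩ := h b hb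
      rw [← hmap, Finset.card_image_of_injective _ Fin.val_injective] at h1
      rw [← hmap, Finset.sum_image (fun x _ y _ hxy => Fin.ext hxy)] at h2
      refine ⟨h1, ?_⟩
      simp only [sz_get]
      rw [← Finset.sum_div, div_le_one (by norm_num)]
      exact_mod_cast h2
    · have : (Finset.univ : Finset (Fin (sz P).length)).filter
          (fun i => g.getD i.1 0 = b) = ∅ := by
        apply Finset.filter_eq_empty_iff.2
        intro i _ hi
        have := hg i.1 (sz_length P ▸ i.2)
        omega
      rw [this]
      simp
  have hle : binsUsed (sz P) (fun i => g.getD i.1 0) ≤ opt := by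
    unfold binsUsed
    calc _ ≤ (Finset.range opt).card := by
          apply Finset.card_le_card
          intro v hv
          obtain ⟨i, -, rfl⟩ := Finset.mem_image.1 hv
          exact Finset.mem_range.2 (hg i.1 (sz_length P ▸ i.2))
      _ = opt := Finset.card_range _
  exact le_trans (Nat.sInf_le ⟨fun i => g.getD i.1 0, hfeas, rfl⟩) hle

/-- The optimum of a nonempty valid input is positive; the packing of a valid online algorithm
witnesses that the infimum is over a nonempty set. -/
lemma opt_pos {A : List ℝ → ℕ} (hA : OnlineValid 3 A) {P : List ℕ} (hP : Good P)
    (hne : P ≠ []) : 1 ≤ OPT 3 (sz P) := by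
  obtain ⟨f, -, hf⟩ : OPT 3 (sz P) ∈
      {n | ∃ f : Fin (sz P).length → ℕ, IsFeasible 3 (sz P) f ∧ binsUsed (sz P) f = n} :=
    Nat.sInf_mem ⟨_, _, hA _ (valid_sz hP), rfl⟩
  rw [← hf]
  have h0 : 0 < (sz P).length := by rw [sz_length]; exact List.length_pos_iff.2 hne
  exact Finset.card_pos.2 ⟨f ⟨0, h0⟩, Finset.mem_image_of_mem _ (Finset.mem_univ _)⟩

lemma bin_append {A : List ℝ → ℕ} {P Q : List ℕ} {j : ℕ} (hj : j < P.length) :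
    bin A (P ++ Q) j = bin A P j := by
  unfold bin
  rw [List.take_append_of_le_length (by omega)]

lemma getD_append {P Q : List ℕ} {j : ℕ} (hj : j < P.length) :
    (P ++ Q).getD j 0 = P.getD j 0 := List.getD_append _ _ _ _ hj

/-- If every bin of the packing of `P` is blocked for an item of size `y > 500`, then each further
item of size `y` opens a new bin.  The bins are given by `cls` as pairs of a bin index and a set of
items in that bin; a bin is blocked if it has three items or too large a sum. -/
lemma large_phase {A : List ℝ → ℕ} (hA : OnlineValid 3 A) {P : List ℕ} (hP : Good P) (y : ℕ)
    (hy : 500 < y ∧ y ≤ 1000) (cls : List (ℕ × Finset ℕ))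
    (hnd : (cls.map Prod.fst).Nodup)
    (hcov : ∀ i < P.length, ∃ p ∈ cls, i ∈ p.2)
    (hcls : ∀ p ∈ cls, p.2.Nonempty ∧ (∀ j ∈ p.2, j < P.length ∧ bin A P j = p.1) ∧
      (3 ≤ p.2.card ∨ 1000 < ∑ j ∈ p.2, P.getD j 0 + y)) (m : ℕ) :
    cls.length + m ≤ onlineBins A (sz (P ++ List.replicate m y)) := by
  induction m with
  | zero =>
    simp only [List.replicate_zero, List.append_nil, add_zero, onlineBins_eq]
    rw [← List.length_map (f := Prod.fst), ← List.toFinset_card_of_nodup hnd]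
    apply Finset.card_le_card
    intro v hv
    rw [List.mem_toFinset, List.mem_map] at hv
    obtain ⟨p, hp, rfl⟩ := hv
    obtain ⟨⟨j, hj⟩, h2, -⟩ := hcls p hp
    exact Finset.mem_image.2 ⟨j, Finset.mem_range.2 (h2 j hj).1, (h2 j hj).2⟩
  | succ m ih =>
    rw [onlineBins_eq] at ih ⊢
    rw [List.replicate_succ', ← List.append_assoc]
    set Q := P ++ List.replicate m y with hQ
    have hgood : Good (Q ++ [y]) := by
      intro n hn
      simp only [hQ, List.mem_append, List.mem_replicate, List.mem_singleton] at hn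
      rcases hn with (hn | hn) | hn
      · exact hP n hn
      · omega
      · omega
    have hPQ : P.length ≤ Q.length := by simp [hQ]
    have hlast : (Q ++ [y]).getD Q.length 0 = y := by simp
    have hnew : bin A (Q ++ [y]) Q.length ∉ (Finset.range Q.length).image (bin A Q) := by
      intro hmem
      obtain ⟨i, hi, hib⟩ := Finset.mem_image.1 hmem
      rw [Finset.mem_range] at hi
      by_cases hiP : i < P.length
      · obtain ⟨p, hp, hip⟩ := hcov i hiP
        obtain ⟨-, h2, h3⟩ := hcls p hp
        have hv : bin A (Q ++ [y]) Q.length = p.1 := by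
          rw [← hib, hQ, bin_append hiP, (h2 i hip).2]
        have hnot : Q.length ∉ p.2 := fun h => by have := (h2 _ h).1; omega
        have key := pack hA hgood (insert Q.length p.2) p.1 (by
          intro j hj
          rcases Finset.mem_insert.1 hj with rfl | hj
          · exact ⟨by simp, hv⟩
          · obtain ⟨h4, h5⟩ := h2 j hj
            refine ⟨by simp; omega, ?_⟩
            rw [bin_append (by omega), hQ, bin_append h4, h5])
        rw [Finset.card_insert_of_notMem hnot, Finset.sum_insert hnot, hlast] at key
        have hsum : ∑ j ∈ p.2, (Q ++ [y]).getD j 0 = ∑ j ∈ p.2, P.getD j 0 := by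
          refine Finset.sum_congr rfl fun j hj => ?_
          have := (h2 j hj).1
          rw [getD_append (by omega), hQ, getD_append this]
        omega
      · have key := pack hA hgood {i, Q.length} (bin A (Q ++ [y]) Q.length) (by
          intro j hj
          rcases Finset.mem_insert.1 hj with rfl | hj
          · exact ⟨by simp; omega, by rw [bin_append hi, hib]⟩
          · rw [Finset.mem_singleton.1 hj]
            exact ⟨by simp, rfl⟩)
        rw [Finset.sum_pair (by omega), hlast, getD_append hi] at key
        have : Q.getD i 0 = y := by
          have h1 : i - P.length < m := by simp [hQ] at hi; omega
          rw [hQ, List.getD_append_right _ _ _ _ (by omega)]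
          simp [h1]
        omega
    have himg : (Finset.range (Q ++ [y]).length).image (bin A (Q ++ [y])) =
        insert (bin A (Q ++ [y]) Q.length) ((Finset.range Q.length).image (bin A Q)) := by
      rw [List.length_append, List.length_singleton, Finset.range_add_one, Finset.image_insert]
      congr 1
      exact Finset.image_congr fun j hj => bin_append (by simpa using hj)
    rw [himg, Finset.card_insert_of_notMem hnew]
    omega

/-- The end of a branch of the adversary's strategy: the tiny items `P` lie in the blocked bins
`cls`, `m` items of size `y` follow, and `g` packs everything into `opt` bins. -/
lemma leaf {A : List ℝ → ℕ} (hA : OnlineValid 3 A) (P : List ℕ) (y m opt : ℕ) (g : List ℕ)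
    (cls : List (ℕ × Finset ℕ)) (hne : P ≠ []) (hP : Good P)
    (hy : 500 < y ∧ y ≤ 1000)
    (hg : ∀ i < (P ++ List.replicate m y).length, g.getD i 0 < opt)
    (h : ∀ b < opt, ((Finset.range (P ++ List.replicate m y).length).filter
        (fun i => g.getD i 0 = b)).card ≤ 3 ∧
      ∑ i ∈ (Finset.range (P ++ List.replicate m y).length).filter (fun i => g.getD i 0 = b),
        (P ++ List.replicate m y).getD i 0 ≤ 1000)
    (hratio : 7 * opt ≤ 4 * (cls.length + m))
    (hnd : (cls.map Prod.fst).Nodup)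
    (hcov : ∀ i < P.length, ∃ p ∈ cls, i ∈ p.2)
    (hcls : ∀ p ∈ cls, p.2.Nonempty ∧ (∀ j ∈ p.2, j < P.length ∧ bin A P j = p.1) ∧
      (3 ≤ p.2.card ∨ 1000 < ∑ j ∈ p.2, P.getD j 0 + y)) :
    ∃ L : List ℝ, ValidInput L ∧ 1 ≤ OPT 3 L ∧
      (7 / 4 : ℝ) * (OPT 3 L : ℝ) ≤ (onlineBins A L : ℝ) := by
  have hgood : Good (P ++ List.replicate m y) := by
    intro n hn
    rcases List.mem_append.1 hn with hn | hn
    · exact hP n hn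
    · have := (List.mem_replicate.1 hn).2
      omega
  refine ⟨sz (P ++ List.replicate m y), valid_sz hgood, opt_pos hA hgood (by simp [hne]), ?_⟩
  have h1 := opt_le _ g opt hg h
  have h2 := large_phase hA hP y hy cls hnd hcov hcls m
  have h3 : 7 * OPT 3 (sz (P ++ List.replicate m y)) ≤
      4 * onlineBins A (sz (P ++ List.replicate m y)) := by omega
  have h4 : (7 : ℝ) * OPT 3 (sz (P ++ List.replicate m y)) ≤
      4 * onlineBins A (sz (P ++ List.replicate m y)) := by exact_mod_cast h3
  linarith

/-- A bin that received three items receives no further item. -/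
lemma full_bin {A : List ℝ → ℕ} (hA : OnlineValid 3 A) {P : List ℕ} (hP : Good P)
    {i j k l : ℕ} (hl : l < P.length) (hij : i < j) (hjk : j < k) (hkl : k < l)
    (h1 : bin A P j = bin A P i) (h2 : bin A P k = bin A P i) :
    bin A P l ≠ bin A P i := by
  intro h3
  have key := (pack hA hP {i, j, k, l} (bin A P i) (by
    intro x hx
    simp only [Finset.mem_insert, Finset.mem_singleton] at hx
    rcases hx with rfl | rfl | rfl | rfl
    · exact ⟨by omega, rfl⟩
    · exact ⟨by omega, h1⟩
    · exact ⟨by omega, h2⟩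
    · exact ⟨hl, h3⟩)).1
  have hc : ({i, j, k, l} : Finset ℕ).card = 4 := by
    rw [Finset.card_insert_of_notMem, Finset.card_insert_of_notMem, Finset.card_pair] <;>
      simp <;> omega
  omega

/-- For k = 3 and every deterministic online algorithm `A`, there exists
an input `L` with A(L) ≥ (7/4)·OPT(L) (and OPT(L) ≥ 1), so the absolute competitive
ratio of `A` is at least 7/4. -/
theorem online_lb_k3 (A : List ℝ → ℕ) (hA : OnlineValid 3 A) :
    ∃ L : List ℝ, ValidInput L ∧ 1 ≤ OPT 3 L ∧
      (7 / 4 : ℝ) * (OPT 3 L : ℝ) ≤ (onlineBins A L : ℝ) := by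
  -- `c P` is the bin of the last item of `P`; in `leaf` below, `cls` indexes items from `0`.
  obtain ⟨c, hc⟩ : ∃ c : List ℕ → ℕ, ∀ P, A (sz P) = c P := ⟨_, fun _ => rfl⟩
  have hb : ∀ P j, bin A P j = c (P.take (j + 1)) := fun P j => hc _
  by_cases h2 : c [10, 10] = c [10]
  swap
  · refine leaf hA [10, 10] 1000 0 1 [0, 0]
      [(c [10], {0}), (c [10, 10], {1})]
      (by simp) (by simp [Good]) (by simp) (by decide) (by decide) (by simp) ?_ ?_ ?_
    · simp; grind
    · simp; decide
    · simp [hb]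
  by_cases h3 : c [10, 10, 10] = c [10]
  swap
  · refine leaf hA [10, 10, 10] 1000 0 1 [0, 0, 0]
      [(c [10], {0, 1}), (c [10, 10, 10], {2})]
      (by simp) (by simp [Good]) (by simp) (by decide) (by decide) (by simp) ?_ ?_ ?_
    · simp; grind
    · simp; decide
    · simp [hb, h2]
  have n4 : c [10, 10, 10, 21] ≠ c [10] := by
    simpa [hb] using full_bin hA (P := [10, 10, 10, 21]) (by simp [Good]) (i := 0) (j := 1)
      (k := 2) (l := 3) (by simp) (by simp) (by simp) (by simp) (by simp [*]) (by simp [*])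
  have n5 : c [10, 10, 10, 21, 50] ≠ c [10] := by
    simpa [hb] using full_bin hA (P := [10, 10, 10, 21, 50]) (by simp [Good]) (i := 0) (j := 1)
      (k := 2) (l := 4) (by simp) (by simp) (by simp) (by simp) (by simp [*]) (by simp [*])
  by_cases h5 : c [10, 10, 10, 21, 50] = c [10, 10, 10, 21]
  swap
  · refine leaf hA [10, 10, 10, 21, 50] 980 1 2 [0, 0, 1, 1, 1, 0]
      [(c [10], {0, 1, 2}), (c [10, 10, 10, 21], {3}), (c [10, 10, 10, 21, 50], {4})]
      (by simp) (by simp [Good]) (by simp) (by decide) (by decide) (by simp) ?_ ?_ ?_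
    · simp; grind
    · simp; decide
    · simp [hb, h2, h3]
  have n6 : c [10, 10, 10, 21, 50, 33] ≠ c [10] := by
    simpa [hb] using full_bin hA (P := [10, 10, 10, 21, 50, 33]) (by simp [Good]) (i := 0) (j := 1)
      (k := 2) (l := 5) (by simp) (by simp) (by simp) (by simp) (by simp [*]) (by simp [*])
  by_cases h6 : c [10, 10, 10, 21, 50, 33] = c [10, 10, 10, 21]
  -- `33` joins `21, 50`: both bins are full.
  · have n7 : c [10, 10, 10, 21, 50, 33, 100] ≠ c [10] := by
      simpa [hb] using full_bin hA (P := [10, 10, 10, 21, 50, 33, 100]) (by simp [Good])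
        (i := 0) (j := 1)
        (k := 2) (l := 6) (by simp) (by simp) (by simp) (by simp) (by simp [*]) (by simp [*])
    have m7 : c [10, 10, 10, 21, 50, 33, 100] ≠ c [10, 10, 10, 21] := by
      simpa [hb] using full_bin hA (P := [10, 10, 10, 21, 50, 33, 100]) (by simp [Good])
        (i := 3) (j := 4)
        (k := 5) (l := 6) (by simp) (by simp) (by simp) (by simp) (by simp [*]) (by simp [*])
    have n8 : c [10, 10, 10, 21, 50, 33, 100, 100] ≠ c [10] := by
      simpa [hb] using full_bin hA (P := [10, 10, 10, 21, 50, 33, 100, 100]) (by simp [Good])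
        (i := 0) (j := 1)
        (k := 2) (l := 7) (by simp) (by simp) (by simp) (by simp) (by simp [*]) (by simp [*])
    have m8 : c [10, 10, 10, 21, 50, 33, 100, 100] ≠ c [10, 10, 10, 21] := by
      simpa [hb] using full_bin hA (P := [10, 10, 10, 21, 50, 33, 100, 100]) (by simp [Good])
        (i := 3) (j := 4)
        (k := 5) (l := 7) (by simp) (by simp) (by simp) (by simp) (by simp [*]) (by simp [*])
    by_cases h8 : c [10, 10, 10, 21, 50, 33, 100, 100] = c [10, 10, 10, 21, 50, 33, 100]
    · refine leaf hA [10, 10, 10, 21, 50, 33, 100, 100] 890 4 4 [0, 1, 2, 3, 0, 3, 1, 2, 0, 1, 2, 3]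
        [(c [10], {0, 1, 2}), (c [10, 10, 10, 21], {3, 4, 5}),
         (c [10, 10, 10, 21, 50, 33, 100], {6, 7})]
        (by simp) (by simp [Good]) (by simp) (by decide) (by decide) (by simp) ?_ ?_ ?_
      · simp; grind
      · simp; decide
      · simp [hb, h2, h3, h5, h6, h8]
    · refine leaf hA [10, 10, 10, 21, 50, 33, 100, 100] 967 3 4 [0, 0, 1, 1, 3, 2, 3, 3, 0, 1, 2]
        [(c [10], {0, 1, 2}), (c [10, 10, 10, 21], {3, 4, 5}),
         (c [10, 10, 10, 21, 50, 33, 100], {6}),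
         (c [10, 10, 10, 21, 50, 33, 100, 100], {7})]
        (by simp) (by simp [Good]) (by simp) (by decide) (by decide) (by simp) ?_ ?_ ?_
      · simp; grind
      · simp; decide
      · simp [hb, h2, h3, h5, h6]
  -- `33` opens a third bin.
  · have n7 : c [10, 10, 10, 21, 50, 33, 32] ≠ c [10] := by
      simpa [hb] using full_bin hA (P := [10, 10, 10, 21, 50, 33, 32]) (by simp [Good])
        (i := 0) (j := 1)
        (k := 2) (l := 6) (by simp) (by simp) (by simp) (by simp) (by simp [*]) (by simp [*])
    by_cases h7 : c [10, 10, 10, 21, 50, 33, 32] = c [10, 10, 10, 21]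
    -- `32` joins `21, 50`.
    · have n8 : c [10, 10, 10, 21, 50, 33, 32, 100] ≠ c [10] := by
        simpa [hb] using full_bin hA (P := [10, 10, 10, 21, 50, 33, 32, 100]) (by simp [Good])
          (i := 0) (j := 1)
          (k := 2) (l := 7) (by simp) (by simp) (by simp) (by simp) (by simp [*]) (by simp [*])
      have m8 : c [10, 10, 10, 21, 50, 33, 32, 100] ≠ c [10, 10, 10, 21] := by
        simpa [hb] using full_bin hA (P := [10, 10, 10, 21, 50, 33, 32, 100]) (by simp [Good])
          (i := 3) (j := 4)
          (k := 6) (l := 7) (by simp) (by simp) (by simp) (by simp) (by simp [*]) (by simp [*])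
      by_cases h8 : c [10, 10, 10, 21, 50, 33, 32, 100] = c [10, 10, 10, 21, 50, 33]
      · refine leaf hA [10, 10, 10, 21, 50, 33, 32, 100]
          890 4 4 [0, 1, 2, 3, 0, 3, 2, 1, 0, 1, 2, 3]
          [(c [10], {0, 1, 2}), (c [10, 10, 10, 21], {3, 4, 6}),
           (c [10, 10, 10, 21, 50, 33], {5, 7})]
          (by simp) (by simp [Good]) (by simp) (by decide) (by decide) (by simp) ?_ ?_ ?_
        · simp; grind
        · simp; decide
        · simp [hb, h2, h3, h5, h7, h8]
      · refine leaf hA [10, 10, 10, 21, 50, 33, 32, 100] 968 3 4 [0, 0, 1, 1, 3, 3, 2, 3, 0, 1, 2]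
          [(c [10], {0, 1, 2}), (c [10, 10, 10, 21], {3, 4, 6}),
           (c [10, 10, 10, 21, 50, 33], {5}),
           (c [10, 10, 10, 21, 50, 33, 32, 100], {7})]
          (by simp) (by simp [Good]) (by simp) (by decide) (by decide) (by simp) ?_ ?_ ?_
        · simp; grind
        · simp; decide
        · simp [hb, h2, h3, h5, h7]
    · by_cases h7' : c [10, 10, 10, 21, 50, 33, 32] = c [10, 10, 10, 21, 50, 33]
      swap
      · refine leaf hA [10, 10, 10, 21, 50, 33, 32] 969 2 3 [0, 0, 1, 1, 2, 2, 2, 0, 1]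
          [(c [10], {0, 1, 2}), (c [10, 10, 10, 21], {3, 4}),
           (c [10, 10, 10, 21, 50, 33], {5}),
           (c [10, 10, 10, 21, 50, 33, 32], {6})]
          (by simp) (by simp [Good]) (by simp) (by decide) (by decide) (by simp) ?_ ?_ ?_
        · simp; grind
        · simp; decide
        · simp [hb, h2, h3, h5]
      -- `32` joins `33`.
      have n8 : c [10, 10, 10, 21, 50, 33, 32, 33] ≠ c [10] := by
        simpa [hb] using full_bin hA (P := [10, 10, 10, 21, 50, 33, 32, 33]) (by simp [Good])
          (i := 0) (j := 1)
          (k := 2) (l := 7) (by simp) (by simp) (by simp) (by simp) (by simp [*]) (by simp [*])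
      by_cases h8 : c [10, 10, 10, 21, 50, 33, 32, 33] = c [10, 10, 10, 21]
      · refine leaf hA [10, 10, 10, 21, 50, 33, 32, 33] 940 4 4 [0, 1, 2, 3, 0, 3, 1, 2, 0, 1, 2, 3]
          [(c [10], {0, 1, 2}), (c [10, 10, 10, 21], {3, 4, 7}),
           (c [10, 10, 10, 21, 50, 33], {5, 6})]
          (by simp) (by simp [Good]) (by simp) (by decide) (by decide) (by simp) ?_ ?_ ?_
        · simp; grind
        · simp; decide
        · simp [hb, h2, h3, h5, h7', h8]
      · by_cases h8' : c [10, 10, 10, 21, 50, 33, 32, 33] = c [10, 10, 10, 21, 50, 33]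
        · refine leaf hA [10, 10, 10, 21, 50, 33, 32, 33]
            940 4 4 [0, 1, 2, 3, 0, 3, 1, 2, 0, 1, 2, 3]
            [(c [10], {0, 1, 2}), (c [10, 10, 10, 21], {3, 4}),
             (c [10, 10, 10, 21, 50, 33], {5, 6, 7})]
            (by simp) (by simp [Good]) (by simp) (by decide) (by decide) (by simp) ?_ ?_ ?_
          · simp; grind
          · simp; decide
          · simp [hb, h2, h3, h5, h7', h8']
        · refine leaf hA [10, 10, 10, 21, 50, 33, 32, 33] 968 3 4 [0, 0, 1, 1, 3, 3, 2, 3, 0, 1, 2]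
            [(c [10], {0, 1, 2}), (c [10, 10, 10, 21], {3, 4}),
             (c [10, 10, 10, 21, 50, 33], {5, 6}),
             (c [10, 10, 10, 21, 50, 33, 32, 33], {7})]
            (by simp) (by simp [Good]) (by simp) (by decide) (by decide) (by simp) ?_ ?_ ?_
          · simp; grind
          · simp; decide
          · simp [hb, h2, h3, h5, h7']
end
end

section
/- For k = 5 and every deterministic online algorithm A for bin packing with cardinality constraint k, the asymptotic competitive ratio of A is at least 3/2: for every ε > 0 and every N there exists an input L with OPT(L) ≥ N and A(L) ≥ (3/2 − ε)·OPT(L). -/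
/-!
The lower bound comes from one fixed list, stopped at one of four moments. For `M ≥ 1` the list
has `5M` items of size `0.01`, then `10M` of size `0.21`, `10M` of size `0.26` and `10M` of size
`0.51`; its first `5M`, `15M`, `25M`, `35M` items can be packed into `M`, `3M`, `5M`, `10M` bins,
simply by putting item `i` into bin `i` modulo the number of bins (`OPT_items_le`).

Let `A₁, …, A₄` be the numbers of bins the algorithm uses after the four phases. Give the items of
the four phases the weights `1, 1, 1, 2`, and a bin the value `6, 4, 3, 2` according to the phase
in which it is opened. No bin of a feasible packing weighs more than its value (`bin_weight_le`),
the values add up to `2 A₁ + A₂ + A₃ + 2 A₄`, and the total weight is `45 M`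
(`weighted_bins_ge`). If every `A_j` were below `3/2` times the optimum, this sum would be
below `3/2 (2 M + 3 M + 5 M + 20 M) = 45 M`.
-/


open scoped Classical
noncomputable section

/-! ### The hard input -/

/-- The sizes of the four phases in units of `1/100`, indexed by blocks of `M` consecutive items:
blocks `0`–`4`, `5`–`14`, `15`–`24` and from `25` on. -/
def blockSize (c : ℕ) : ℕ :=
  if c < 5 then 1 else if c < 15 then 21 else if c < 25 then 26 else 51

/-- The first `n` items of the hard input with parameter `M`. -/
def items (M n : ℕ) : List ℝ :=
  (List.range n).map (fun i => (blockSize (i / M) : ℝ) / 100)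

lemma items_length (M n : ℕ) : (items M n).length = n := by simp [items]

lemma items_get (M n : ℕ) (i : Fin (items M n).length) :
    (items M n).get i = (blockSize (i.1 / M) : ℝ) / 100 := by
  rw [List.get_eq_getElem]
  simp only [items, List.getElem_map, List.getElem_range]

lemma items_take (M n m : ℕ) (h : m ≤ n) : (items M n).take m = items M m := by
  simp [items, ← List.map_take, List.take_range, Nat.min_eq_left h]

lemma items_valid (M n : ℕ) : ValidInput (items M n) := by
  intro x hx
  simp only [items, List.mem_map] at hx
  obtain ⟨i, -, rfl⟩ := hx
  unfold blockSize
  split_ifs <;> norm_num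

/-- The bin of the item with index `i`; it does not depend on how far the input continues. -/
def binOf (A : List ℝ → ℕ) (M i : ℕ) : ℕ := A (items M (i + 1))

lemma onlinePacking_items (A : List ℝ → ℕ) (M n : ℕ) (i : Fin (items M n).length) :
    onlinePacking A (items M n) i = binOf A M i.1 := by
  have h : i.1 + 1 ≤ n := i.2.trans_eq (items_length M n)
  simp only [onlinePacking, binOf, items_take M n _ h]

lemma sum_fin_items {α : Type*} [AddCommMonoid α] (M n : ℕ) (p : ℕ → Prop) [DecidablePred p]
    (g : ℕ → α) :
    ∑ i ∈ Finset.univ.filter (fun i : Fin (items M n).length => p i.1), g i.1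
      = ∑ i ∈ (Finset.range n).filter p, g i := by
  rw [Finset.sum_filter, Finset.sum_filter,
    Fin.sum_univ_eq_sum_range (fun i => if p i then g i else 0), items_length]

/-- Feasibility of a packing of `items M n`, with indices in `ℕ` and integral sizes. -/
lemma isFeasible_items_iff (M n : ℕ) (h : ℕ → ℕ) :
    IsFeasible 5 (items M n) (fun i => h i.1) ↔
      ∀ b, ((Finset.range n).filter (fun i => h i = b)).card ≤ 5 ∧
        ∑ i ∈ (Finset.range n).filter (fun i => h i = b), blockSize (i / M) ≤ 100 := by
  unfold IsFeasible
  refine forall_congr' fun b => and_congr ?_ ?_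
  · rw [Finset.card_eq_sum_ones, Finset.card_eq_sum_ones,
      ← sum_fin_items M n (fun i => h i = b) (fun _ => 1)]
  · simp only [items_get]
    rw [sum_fin_items M n (fun i => h i = b) (fun i => (blockSize (i / M) : ℝ) / 100),
      ← Finset.sum_div, div_le_one (by norm_num)]
    exact_mod_cast Iff.rfl

lemma binsUsed_items (M n : ℕ) (h : ℕ → ℕ) :
    binsUsed (items M n) (fun i => h i.1) = ((Finset.range n).image h).card := by
  unfold binsUsed
  congr 1
  ext b
  simp only [Finset.mem_image, Finset.mem_univ, true_and, Finset.mem_range]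
  constructor
  · rintro ⟨i, rfl⟩
    exact ⟨i.1, i.2.trans_eq (items_length M n), rfl⟩
  · rintro ⟨i, hi, rfl⟩
    exact ⟨⟨i, by rwa [items_length]⟩, rfl⟩

lemma onlineBins_items (A : List ℝ → ℕ) (M n : ℕ) :
    onlineBins A (items M n) = ((Finset.range n).image (binOf A M)).card := by
  rw [← binsUsed_items, onlineBins]
  congr 1
  funext i
  exact onlinePacking_items A M n i

/-! ### Bounds on the optimum -/

/-- Packing item `i` into bin `i % (K * M)` is feasible for the first `C` blocks as soon as packing
block `c` into bin `c % K` is feasible for a single item per block: two items sharing a bin agree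
modulo `M`, so a bin has at most one item of each block. -/
lemma isFeasible_mod (M C K : ℕ) (hM : 0 < M)
    (hK : ∀ r, ((Finset.range C).filter (fun c => c % K = r)).card ≤ 5 ∧
      ∑ c ∈ (Finset.range C).filter (fun c => c % K = r), blockSize c ≤ 100) :
    IsFeasible 5 (items M (C * M)) (fun i => i.1 % (K * M)) := by
  rw [isFeasible_items_iff M (C * M) (fun i => i % (K * M))]
  intro b
  have hdiv : ∀ i, i % (K * M) = b → i / M % K = b / M := by
    rintro i rfl
    rw [mul_comm K M, Nat.mod_mul_right_div_self]
  have hmod : ∀ i, i % (K * M) = b → i % M = b % M := by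
    rintro i rfl
    rw [Nat.mod_mod_of_dvd _ (Dvd.intro_left K rfl)]
  have hinj : Set.InjOn (fun i => i / M)
      ((Finset.range (C * M)).filter (fun i => i % (K * M) = b) : Finset ℕ) := by
    intro i hi j hj hij
    simp only [Finset.coe_filter, Set.mem_ofPred_eq] at hi hj hij
    rw [← Nat.div_add_mod i M, ← Nat.div_add_mod j M, hij, hmod i hi.2, hmod j hj.2]
  have hsub : ((Finset.range (C * M)).filter (fun i => i % (K * M) = b)).image (fun i => i / M) ⊆
      (Finset.range C).filter (fun c => c % K = b / M) := by
    intro c hc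
    simp only [Finset.mem_image, Finset.mem_filter, Finset.mem_range] at hc ⊢
    obtain ⟨i, ⟨hi, hib⟩, rfl⟩ := hc
    exact ⟨(Nat.div_lt_iff_lt_mul hM).2 hi, hdiv i hib⟩
  obtain ⟨h1, h2⟩ := hK (b / M)
  refine ⟨?_, ?_⟩
  · rw [← Finset.card_image_of_injOn hinj]
    exact (Finset.card_le_card hsub).trans h1
  · rw [← Finset.sum_image (f := blockSize) hinj]
    exact (Finset.sum_le_sum_of_subset hsub).trans h2

lemma OPT_items_le (M C K : ℕ) (hM : 0 < M) (hK0 : 0 < K)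
    (hK : ∀ r < K, ((Finset.range C).filter (fun c => c % K = r)).card ≤ 5 ∧
      ∑ c ∈ (Finset.range C).filter (fun c => c % K = r), blockSize c ≤ 100) :
    OPT 5 (items M (C * M)) ≤ K * M := by
  have hK' : ∀ r, ((Finset.range C).filter (fun c => c % K = r)).card ≤ 5 ∧
      ∑ c ∈ (Finset.range C).filter (fun c => c % K = r), blockSize c ≤ 100 := by
    intro r
    by_cases hr : r < K
    · exact hK r hr
    · have : (Finset.range C).filter (fun c => c % K = r) = ∅ := by
        refine Finset.filter_eq_empty_iff.2 fun c _ hc => hr ?_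
        rw [← hc]; exact Nat.mod_lt _ hK0
      simp [this]
  calc OPT 5 (items M (C * M))
      ≤ binsUsed (items M (C * M)) (fun i => i.1 % (K * M)) :=
        Nat.sInf_le ⟨_, isFeasible_mod M C K hM hK', rfl⟩
    _ = ((Finset.range (C * M)).image (fun i => i % (K * M))).card :=
        binsUsed_items M (C * M) (fun i => i % (K * M))
    _ ≤ (Finset.range (K * M)).card := by
        refine Finset.card_le_card fun b hb => ?_
        simp only [Finset.mem_image, Finset.mem_range] at hb ⊢
        obtain ⟨i, -, rfl⟩ := hb
        exact Nat.mod_lt _ (Nat.mul_pos hK0 hM)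
    _ = K * M := Finset.card_range _

/-- An online algorithm provides the feasible packing that makes the infimum defining `OPT`
attained, and a bin holds at most five items. -/
lemma length_le_OPT (A : List ℝ → ℕ) (hA : OnlineValid 5 A) (L : List ℝ) (hL : ValidInput L) :
    L.length ≤ 5 * OPT 5 L := by
  obtain ⟨f, hf, hfn⟩ := Nat.sInf_mem
    (s := {n | ∃ f : Fin L.length → ℕ, IsFeasible 5 L f ∧ binsUsed L f = n})
    ⟨_, onlinePacking A L, hA L hL, rfl⟩
  have hf' : binsUsed L f = OPT 5 L := hfn
  have := Finset.card_le_mul_card_image (f := f) Finset.univ 5 (fun b _ => (hf b).1)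
  rw [Finset.card_univ, Fintype.card_fin] at this
  rw [← hf']
  exact this

/-! ### Weights of the bins of an online algorithm -/

/-- The weight of an item, as a function of its block. -/
def weight (c : ℕ) : ℕ := if c < 25 then 1 else 2

/-- A sum over the items of a bin, split into the four phases. -/
lemma sum_by_phase (M : ℕ) (S : Finset ℕ) (g : ℕ → ℕ) (x y z u : ℕ)
    (h1 : ∀ c < 5, g c = x) (h2 : ∀ c, 5 ≤ c → c < 15 → g c = y)
    (h3 : ∀ c, 15 ≤ c → c < 25 → g c = z) (h4 : ∀ c, 25 ≤ c → g c = u) :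
    ∑ i ∈ S, g (i / M) =
      x * (S.filter (fun i => i / M < 5)).card +
      y * (S.filter (fun i => 5 ≤ i / M ∧ i / M < 15)).card +
      z * (S.filter (fun i => 15 ≤ i / M ∧ i / M < 25)).card +
      u * (S.filter (fun i => 25 ≤ i / M)).card := by
  simp only [Finset.card_filter, Finset.mul_sum, ← Finset.sum_add_distrib]
  refine Finset.sum_congr rfl fun i _ => ?_
  generalize i / M = c
  rcases lt_or_ge c 5 with h | h
  · rw [h1 c h]; split_ifs <;> omega
  rcases lt_or_ge c 15 with h' | h'
  · rw [h2 c h h']; split_ifs <;> omega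
  rcases lt_or_ge c 25 with h'' | h''
  · rw [h3 c h' h'']; split_ifs <;> omega
  · rw [h4 c h'']; split_ifs <;> omega

/-- A bin opened in phase `1, 2, 3, 4` has weight at most `6, 4, 3, 2`; these are the partial sums
of the coefficients `2, 1, 1, 2`, taken over the phases at whose end the bin is in use. -/
lemma bin_weight_le (A : List ℝ → ℕ) (hA : OnlineValid 5 A) (M : ℕ) (hM : 0 < M) (b : ℕ) :
    ∑ i ∈ (Finset.range (35 * M)).filter (fun i => binOf A M i = b), weight (i / M) ≤
      2 * (if b ∈ (Finset.range (5 * M)).image (binOf A M) then 1 else 0) +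
      (if b ∈ (Finset.range (15 * M)).image (binOf A M) then 1 else 0) +
      (if b ∈ (Finset.range (25 * M)).image (binOf A M) then 1 else 0) +
      2 * (if b ∈ (Finset.range (35 * M)).image (binOf A M) then 1 else 0) := by
  have hfeas : IsFeasible 5 (items M (35 * M)) (fun i => binOf A M i.1) := by
    have := hA _ (items_valid M (35 * M))
    rwa [show onlinePacking A (items M (35 * M)) = fun i => binOf A M i.1 from
      funext (onlinePacking_items A M (35 * M))] at this
  obtain ⟨hcard, hsize⟩ := (isFeasible_items_iff M (35 * M) (binOf A M)).1 hfeas b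
  set S := (Finset.range (35 * M)).filter (fun i => binOf A M i = b) with hS
  rw [Finset.card_eq_sum_ones, sum_by_phase M S (fun _ => 1) 1 1 1 1 (by simp) (by simp)
    (by simp) (by simp)] at hcard
  rw [sum_by_phase M S blockSize 1 21 26 51
    (by intro c h; simp [blockSize, h])
    (by intro c h h'; unfold blockSize; split_ifs <;> omega)
    (by intro c h h'; unfold blockSize; split_ifs <;> omega)
    (by intro c h; unfold blockSize; split_ifs <;> omega)] at hsize
  rw [sum_by_phase M S weight 1 1 1 2
    (by intro c h; unfold weight; split_ifs <;> omega)
    (by intro c h h'; unfold weight; split_ifs <;> omega)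
    (by intro c h h'; unfold weight; split_ifs <;> omega)
    (by intro c h; unfold weight; split_ifs <;> omega)]
  -- A phase with an item in the bin shows that the bin is in use at the end of that phase.
  have hmem : ∀ (P : ℕ → Prop) [DecidablePred P] (T : ℕ), (∀ c, c < 35 → P c → c < T) →
      0 < (S.filter (fun i => P (i / M))).card →
      b ∈ (Finset.range (T * M)).image (binOf A M) := by
    intro P _ T hP hpos
    obtain ⟨i, hi⟩ := Finset.card_pos.1 hpos
    simp only [hS, Finset.mem_filter, Finset.mem_range] at hi
    refine Finset.mem_image.2 ⟨i, Finset.mem_range.2 ?_, hi.1.2⟩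
    exact (Nat.div_lt_iff_lt_mul hM).1 (hP _ ((Nat.div_lt_iff_lt_mul hM).2 hi.1.1) hi.2)
  have mono : ∀ T T' : ℕ, T ≤ T' → b ∈ (Finset.range (T * M)).image (binOf A M) →
      b ∈ (Finset.range (T' * M)).image (binOf A M) := fun T T' h hb =>
    Finset.image_subset_image (Finset.range_mono (Nat.mul_le_mul_right M h)) hb
  have p1 := hmem (fun c => c < 5) 5 (fun c _ h => h)
  have p2 := hmem (fun c => 5 ≤ c ∧ c < 15) 15 (fun c _ h => h.2)
  have p3 := hmem (fun c => 15 ≤ c ∧ c < 25) 25 (fun c _ h => h.2)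
  have p4 := hmem (fun c => 25 ≤ c) 35 (fun c h _ => h)
  have m1 := mono 5 15 (by norm_num)
  have m2 := mono 15 25 (by norm_num)
  have m3 := mono 25 35 (by norm_num)
  generalize (S.filter (fun i => i / M < 5)).card = n1 at *
  generalize (S.filter (fun i => 5 ≤ i / M ∧ i / M < 15)).card = n2 at *
  generalize (S.filter (fun i => 15 ≤ i / M ∧ i / M < 25)).card = n3 at *
  generalize (S.filter (fun i => 25 ≤ i / M)).card = n4 at *
  generalize (Finset.range (5 * M)).image (binOf A M) = I1 at *
  generalize (Finset.range (15 * M)).image (binOf A M) = I2 at *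
  generalize (Finset.range (25 * M)).image (binOf A M) = I3 at *
  generalize (Finset.range (35 * M)).image (binOf A M) = I4 at *
  clear hmem mono hS
  split_ifs <;> grind

lemma total_weight (M : ℕ) (hM : 0 < M) :
    ∑ i ∈ Finset.range (35 * M), weight (i / M) = 45 * M := by
  have h : ∀ C : ℕ, ∑ i ∈ Finset.range (C * M), weight (i / M)
      = (∑ c ∈ Finset.range C, weight c) * M := by
    intro C
    induction C with
    | zero => simp
    | succ C ih =>
      rw [Nat.succ_mul, Finset.sum_range_add, ih, Finset.sum_range_succ, add_mul]
      congr 1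
      rw [Finset.sum_congr rfl (g := fun _ => weight C)]
      · simp [mul_comm]
      · intro j hj
        rw [mul_comm C M, Nat.mul_add_div hM, Nat.div_eq_of_lt (Finset.mem_range.1 hj), add_zero]
  rw [h 35]
  congr 1

lemma weighted_bins_ge (A : List ℝ → ℕ) (hA : OnlineValid 5 A) (M : ℕ) (hM : 0 < M) :
    45 * M ≤ 2 * onlineBins A (items M (5 * M)) + onlineBins A (items M (15 * M)) +
      onlineBins A (items M (25 * M)) + 2 * onlineBins A (items M (35 * M)) := by
  simp only [onlineBins_items]
  set I : ℕ → Finset ℕ := fun T => (Finset.range (T * M)).image (binOf A M) with hI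
  have hcard : ∀ T ≤ 35, ∑ b ∈ I 35, (if b ∈ I T then 1 else 0) = (I T).card := by
    intro T hT
    rw [← Finset.card_filter, Finset.filter_mem_eq_inter, Finset.inter_eq_right.2]
    exact Finset.image_subset_image (Finset.range_mono (Nat.mul_le_mul_right M hT))
  rw [← total_weight M hM,
    ← Finset.sum_fiberwise_of_maps_to (g := binOf A M) (t := I 35)
      (fun i hi => Finset.mem_image_of_mem _ hi)]
  refine (Finset.sum_le_sum fun b _ => bin_weight_le A hA M hM b).trans (le_of_eq ?_)
  rw [Finset.sum_add_distrib, Finset.sum_add_distrib, Finset.sum_add_distrib,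
    ← Finset.mul_sum, ← Finset.mul_sum]
  have e1 := hcard 5 (by norm_num)
  have e2 := hcard 15 (by norm_num)
  have e3 := hcard 25 (by norm_num)
  have e4 := hcard 35 (by norm_num)
  simp only [hI] at e1 e2 e3 e4
  rw [e1, e2, e3, e4]

/-- For k = 5, the asymptotic competitive ratio of every deterministic
online algorithm is at least 3/2. -/
theorem online_asymp_lb_k5 (A : List ℝ → ℕ) (hA : OnlineValid 5 A) :
    ∀ ε : ℝ, 0 < ε → ∀ N : ℕ, ∃ L : List ℝ, ValidInput L ∧ N ≤ OPT 5 L ∧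
      ((3 / 2 : ℝ) - ε) * (OPT 5 L : ℝ) ≤ (onlineBins A L : ℝ) := by
  intro ε hε N
  have hM : 0 < N + 1 := N.succ_pos
  have hw := weighted_bins_ge A hA (N + 1) hM
  have o1 := OPT_items_le (N + 1) 5 1 hM (by norm_num) (by decide)
  have o2 := OPT_items_le (N + 1) 15 3 hM (by norm_num) (by decide)
  have o3 := OPT_items_le (N + 1) 25 5 hM (by norm_num) (by decide)
  have o4 := OPT_items_le (N + 1) 35 10 hM (by norm_num) (by decide)
  have hN : ∀ T, 5 ≤ T → N ≤ OPT 5 (items (N + 1) (T * (N + 1))) := by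
    intro T hT
    have h := length_le_OPT A hA _ (items_valid (N + 1) (T * (N + 1)))
    rw [items_length] at h
    have := Nat.mul_le_mul_right (N + 1) hT
    omega
  by_contra! hcon
  have key : ∀ T, 5 ≤ T → (onlineBins A (items (N + 1) (T * (N + 1))) : ℝ) <
      3 / 2 * (OPT 5 (items (N + 1) (T * (N + 1))) : ℝ) := by
    intro T hT
    have h := hcon _ (items_valid (N + 1) (T * (N + 1))) (hN T hT)
    have h0 : (0 : ℝ) ≤ OPT 5 (items (N + 1) (T * (N + 1))) := Nat.cast_nonneg _
    nlinarith [mul_nonneg hε.le h0]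
  have k1 := key 5 (by norm_num)
  have k2 := key 15 (by norm_num)
  have k3 := key 25 (by norm_num)
  have k4 := key 35 (by norm_num)
  rify at hw o1 o2 o3 o4
  linarith
end
end

section
/- For k ∈ {7, 8} and every deterministic online algorithm A for bin packing with cardinality constraint k, the asymptotic competitive ratio of A is at least (k² + 24k)/(k² + 10k + 24): for every ε > 0 and every N there exists an input L with OPT(L) ≥ N and A(L) ≥ ((k² + 24k)/(k² + 10k + 24) − ε)·OPT(L). This value equals 217/143 for k = 7 and 32/21 for k = 8. -/
/-!
The adversary uses four item sizes, `1/200`, `30/200 > 1/7`, `68/200 > 1/3` and `101/200 > 1/2`,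
presented in this order in four batches. With `M = k * q` and `q` large, the first batch has
`(k - 6) * M` items and each of the others has `6 * M`. After the four batches the optimum is at
most `(k - 6) * q`, `M`, `3 * M` and `6 * M` respectively: every bin is filled by dealing each
batch out cyclically (`piece_le`, `opt_le`).

The lower bound for the algorithm is linear programming duality. Give the items of the four batches
the weights `1, 1, 2, 2`, and give the four stopping times the multipliers `k - 4, 2, 2, 2`.
In every feasible bin the total weight is at most the sum of the multipliers of the
stopping times at which that bin is already open (`bin_weight`). Summing over the bins
(`weighted_bins`), the numbers of bins `B₁, …, B₄` used at the four stopping times satisfy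
`(k - 4) B₁ + 2 B₂ + 2 B₃ + 2 B₄ ≥ (k² + 24 k) q`, while the same combination of the
bounds on the optima equals `(k² + 10 k + 24) q`. Hence at one of the stopping times the ratio is
at least `(k² + 24 k) / (k² + 10 k + 24)`.
-/

open scoped Classical
noncomputable section

/-! ### The adversarial input -/

/-- Size, in units of `1/200`, of item number `i` (counted from `0`), for a first batch of `T` items
followed by three batches of `n` items. All items beyond index `T + 2 * n` are of the last type. -/
def advUnits (T n i : ℕ) : ℕ :=
  if i < T then 1 else if i < T + n then 30 else if i < T + n + n then 68 else 101

/-- Position of item number `i` inside its batch. -/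
def advOffset (T n i : ℕ) : ℕ :=
  if i < T then i else if i < T + n then i - T else if i < T + n + n then i - (T + n)
    else i - (T + n + n)

/-- The first `m` items of the adversarial sequence. -/
def advList (T n m : ℕ) : List ℝ := (List.range m).map (fun i => (advUnits T n i : ℝ) / 200)

lemma advList_length (T n m : ℕ) : (advList T n m).length = m := by simp [advList]

lemma advList_valid (T n m : ℕ) : ValidInput (advList T n m) := by
  intro x hx
  simp only [advList, List.mem_map, List.mem_range] at hx
  obtain ⟨i, -, rfl⟩ := hx
  unfold advUnits
  split_ifs <;> norm_num

lemma advList_take (T n m i : ℕ) (h : i ≤ m) : (advList T n m).take i = advList T n i := by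
  simp [advList, ← List.map_take, List.take_range, h]

/-- The bin chosen by the algorithm `A` for item number `i` of the adversarial sequence. -/
def advBin (A : List ℝ → ℕ) (T n i : ℕ) : ℕ := A (advList T n (i + 1))

lemma onlinePacking_advList (A : List ℝ → ℕ) (T n m : ℕ) :
    onlinePacking A (advList T n m) = fun i => advBin A T n i.1 := by
  funext i
  have hi : i.1 < m := lt_of_lt_of_eq i.2 (advList_length T n m)
  simp only [onlinePacking, advBin]
  rw [advList_take _ _ _ _ (by omega)]

/-- Feasibility of a packing of the adversarial input, with the sizes in integer units and the sums
taken over ranges of natural numbers. -/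
lemma feasible_iff (k T n m : ℕ) (h : ℕ → ℕ) :
    IsFeasible k (advList T n m) (fun i => h i.1) ↔
      ∀ b, (∑ i ∈ Finset.range m, if h i = b then 1 else 0) ≤ k ∧
        (∑ i ∈ Finset.range m, if h i = b then advUnits T n i else 0) ≤ 200 := by
  unfold IsFeasible
  refine forall_congr' fun b => and_congr ?_ ?_
  · rw [Finset.card_filter,
      Fin.sum_univ_eq_sum_range (fun i => if h i = b then 1 else 0), advList_length]
  · have e : ∑ i ∈ Finset.univ.filter (fun i : Fin (advList T n m).length => h i.1 = b),
        (advList T n m).get i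
        = ((∑ i ∈ Finset.range m, if h i = b then advUnits T n i else 0 : ℕ) : ℝ) / 200 := by
      rw [Finset.sum_filter]
      have : ∀ i : Fin (advList T n m).length,
          (if h i.1 = b then (advList T n m).get i else 0)
          = (fun j : ℕ => if h j = b then (advUnits T n j : ℝ) / 200 else 0) i.1 := by
        intro i
        rw [List.get_eq_getElem]
        simp only [advList, List.getElem_map, List.getElem_range]
      rw [Finset.sum_congr rfl fun i _ => this i, Fin.sum_univ_eq_sum_range
        (fun j : ℕ => if h j = b then (advUnits T n j : ℝ) / 200 else 0), advList_length,
        Nat.cast_sum, Finset.sum_div]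
      refine Finset.sum_congr rfl fun i _ => ?_
      split_ifs <;> simp
    rw [e, div_le_one (by norm_num)]
    exact_mod_cast Iff.rfl

lemma binsUsed_eq (T n m : ℕ) (h : ℕ → ℕ) :
    binsUsed (advList T n m) (fun i => h i.1) = ((Finset.range m).image h).card := by
  unfold binsUsed
  congr 1
  ext b
  simp only [Finset.mem_image, Finset.mem_univ, true_and, Finset.mem_range]
  constructor
  · rintro ⟨i, rfl⟩
    exact ⟨i.1, by simpa [advList_length] using i.2, rfl⟩
  · rintro ⟨i, hi, rfl⟩
    exact ⟨⟨i, by rwa [advList_length]⟩, rfl⟩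

/-! ### Bounds on the optimum -/

lemma opt_le_s3 (k T n m Q : ℕ) (h : ℕ → ℕ) (hQ : ∀ i < m, h i < Q)
    (hf : ∀ b, (∑ i ∈ Finset.range m, if h i = b then 1 else 0) ≤ k ∧
        (∑ i ∈ Finset.range m, if h i = b then advUnits T n i else 0) ≤ 200) :
    OPT k (advList T n m) ≤ Q := by
  have h1 : OPT k (advList T n m) ≤ ((Finset.range m).image h).card :=
    Nat.sInf_le ⟨fun i => h i.1, (feasible_iff k T n m h).2 hf, binsUsed_eq T n m h⟩
  refine h1.trans ?_
  calc _ ≤ (Finset.range Q).card := Finset.card_le_card (by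
        intro b hb
        simp only [Finset.mem_image, Finset.mem_range] at hb ⊢
        obtain ⟨i, hi, rfl⟩ := hb
        exact hQ i hi)
    _ = Q := Finset.card_range Q

/-- The cardinality constraint alone forces at least `length / k` bins. -/
lemma le_opt (k N : ℕ) (hk : 0 < k) (L : List ℝ) (hne : ∃ f, IsFeasible k L f)
    (hL : k * N ≤ L.length) : N ≤ OPT k L := by
  obtain ⟨f₀, hf₀⟩ := hne
  refine le_csInf ⟨_, f₀, hf₀, rfl⟩ ?_
  rintro _ ⟨f, hf, rfl⟩
  have := Finset.card_le_mul_card_image (f := f) Finset.univ k (fun b _ => (hf b).1)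
  rw [Finset.card_univ, Fintype.card_fin] at this
  exact Nat.le_of_mul_le_mul_left (hL.trans this) hk

/-- If the items `s, …, s + l - 1` all have `F`-value `x` and are dealt out cyclically to `Q` bins,
with `l ≤ c * Q`, then every bin receives total value at most `c * x` from them. -/
lemma piece_le (h F : ℕ → ℕ) (s l Q c x b : ℕ) (hl : l ≤ c * Q)
    (hh : ∀ j < l, h (s + j) = j % Q) (hF : ∀ j < l, F (s + j) = x) :
    (∑ j ∈ Finset.range l, if h (s + j) = b then F (s + j) else 0) ≤ c * x := by
  have e : (∑ j ∈ Finset.range l, if h (s + j) = b then F (s + j) else 0)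
      = ∑ j ∈ (Finset.range l).filter (fun j => j % Q = b), x := by
    rw [Finset.sum_filter]
    refine Finset.sum_congr rfl fun j hj => ?_
    rw [hh j (Finset.mem_range.1 hj), hF j (Finset.mem_range.1 hj)]
  rw [e, Finset.sum_const, smul_eq_mul]
  refine Nat.mul_le_mul_right _ ?_
  -- A residue class modulo `Q` is parametrised by the quotients.
  calc _ ≤ (Finset.range c).card := by
        refine Finset.card_le_card_of_injOn (fun j => j / Q) ?_ ?_
        · intro j hj
          simp only [Finset.coe_filter, Finset.mem_range, Set.mem_ofPred_eq] at hj
          simp only [Finset.coe_range, Set.mem_Iio]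
          exact Nat.div_lt_of_lt_mul (by rw [mul_comm]; omega)
        · intro i hi j hj hij
          simp only [Finset.coe_filter, Set.mem_ofPred_eq] at hi hj hij
          rw [← Nat.div_add_mod i Q, ← Nat.div_add_mod j Q, hij, hi.2, hj.2]
    _ = c := Finset.card_range c

section batches
variable {T n j : ℕ}

lemma advUnits_zero (h : j < T) : advUnits T n (0 + j) = 1 := by
  rw [zero_add, advUnits, if_pos h]

lemma advUnits_one (h : j < n) : advUnits T n (T + j) = 30 := by
  rw [advUnits, if_neg (by omega), if_pos (by omega)]

lemma advUnits_two (h : j < n) : advUnits T n (T + n + j) = 68 := by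
  rw [advUnits, if_neg (by omega), if_neg (by omega), if_pos (by omega)]

lemma advUnits_three : advUnits T n (T + n + n + j) = 101 := by
  rw [advUnits, if_neg (by omega), if_neg (by omega), if_neg (by omega)]

lemma advOffset_zero (h : j < T) : advOffset T n (0 + j) = j := by
  rw [zero_add, advOffset, if_pos h]

lemma advOffset_one (h : j < n) : advOffset T n (T + j) = j := by
  rw [advOffset, if_neg (by omega), if_pos (by omega)]; omega

lemma advOffset_two (h : j < n) : advOffset T n (T + n + j) = j := by
  rw [advOffset, if_neg (by omega), if_neg (by omega), if_pos (by omega)]; omega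

lemma advOffset_three : advOffset T n (T + n + n + j) = j := by
  rw [advOffset, if_neg (by omega), if_neg (by omega), if_neg (by omega)]; omega

end batches

/-- Dealing out the first batch, `c₀` items per bin. -/
lemma opt_stage_one (k T n Q c₀ : ℕ) (hQ : 0 < Q) (h₀ : T ≤ c₀ * Q) (hk : c₀ ≤ k)
    (hs : c₀ ≤ 200) : OPT k (advList T n T) ≤ Q := by
  refine opt_le_s3 k T n T Q (fun i => advOffset T n i % Q) (fun i _ => Nat.mod_lt _ hQ) fun b => ?_
  have p (F : ℕ → ℕ) (x : ℕ) (hF : ∀ j < T, F (0 + j) = x) :=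
    piece_le (fun i => advOffset T n i % Q) F 0 T Q c₀ x b h₀
      (fun j hj => by simp only [advOffset_zero hj]) hF
  have a := p (fun _ => 1) 1 (fun _ _ => rfl)
  have a' := p _ 1 (fun _ hj => advUnits_zero (n := n) hj)
  simp only [zero_add] at a a'
  constructor <;> omega

/-- Dealing out the first two batches, `c₀ + c₁` items per bin. -/
lemma opt_stage_two (k T n Q c₀ c₁ : ℕ) (hQ : 0 < Q) (h₀ : T ≤ c₀ * Q) (h₁ : n ≤ c₁ * Q)
    (hk : c₀ + c₁ ≤ k) (hs : c₀ + c₁ * 30 ≤ 200) : OPT k (advList T n (T + n)) ≤ Q := by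
  refine opt_le_s3 k T n _ Q (fun i => advOffset T n i % Q) (fun i _ => Nat.mod_lt _ hQ) fun b => ?_
  have p (F : ℕ → ℕ) (x : ℕ) (hF : ∀ j < T, F (0 + j) = x) :=
    piece_le (fun i => advOffset T n i % Q) F 0 T Q c₀ x b h₀
      (fun j hj => by simp only [advOffset_zero hj]) hF
  have q (F : ℕ → ℕ) (x : ℕ) (hF : ∀ j < n, F (T + j) = x) :=
    piece_le (fun i => advOffset T n i % Q) F T n Q c₁ x b h₁
      (fun j hj => by simp only [advOffset_one hj]) hF
  have a := p (fun _ => 1) 1 (fun _ _ => rfl)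
  have a' := p _ 1 (fun _ hj => advUnits_zero (n := n) hj)
  have d := q (fun _ => 1) 1 (fun _ _ => rfl)
  have d' := q _ 30 (fun _ hj => advUnits_one hj)
  simp only [zero_add] at a a'
  rw [Finset.sum_range_add, Finset.sum_range_add]
  constructor <;> omega

/-- Dealing out the first three batches, `c₀ + c₁ + c₂` items per bin. -/
lemma opt_stage_three (k T n Q c₀ c₁ c₂ : ℕ) (hQ : 0 < Q) (h₀ : T ≤ c₀ * Q) (h₁ : n ≤ c₁ * Q)
    (h₂ : n ≤ c₂ * Q) (hk : c₀ + c₁ + c₂ ≤ k) (hs : c₀ + c₁ * 30 + c₂ * 68 ≤ 200) :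
    OPT k (advList T n (T + n + n)) ≤ Q := by
  refine opt_le_s3 k T n _ Q (fun i => advOffset T n i % Q) (fun i _ => Nat.mod_lt _ hQ) fun b => ?_
  have p (F : ℕ → ℕ) (x : ℕ) (hF : ∀ j < T, F (0 + j) = x) :=
    piece_le (fun i => advOffset T n i % Q) F 0 T Q c₀ x b h₀
      (fun j hj => by simp only [advOffset_zero hj]) hF
  have q (F : ℕ → ℕ) (x : ℕ) (hF : ∀ j < n, F (T + j) = x) :=
    piece_le (fun i => advOffset T n i % Q) F T n Q c₁ x b h₁
      (fun j hj => by simp only [advOffset_one hj]) hF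
  have r (F : ℕ → ℕ) (x : ℕ) (hF : ∀ j < n, F (T + n + j) = x) :=
    piece_le (fun i => advOffset T n i % Q) F (T + n) n Q c₂ x b h₂
      (fun j hj => by simp only [advOffset_two hj]) hF
  have a := p (fun _ => 1) 1 (fun _ _ => rfl)
  have a' := p _ 1 (fun _ hj => advUnits_zero (n := n) hj)
  have d := q (fun _ => 1) 1 (fun _ _ => rfl)
  have d' := q _ 30 (fun _ hj => advUnits_one hj)
  have e := r (fun _ => 1) 1 (fun _ _ => rfl)
  have e' := r _ 68 (fun _ hj => advUnits_two hj)
  simp only [zero_add] at a a'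
  rw [Finset.sum_range_add, Finset.sum_range_add, Finset.sum_range_add, Finset.sum_range_add]
  constructor <;> omega

/-- Dealing out all four batches, one item of each batch per bin. -/
lemma opt_stage_four (k T n : ℕ) (hn : 0 < n) (h₀ : T ≤ n) (hk : 4 ≤ k) :
    OPT k (advList T n (T + n + n + n)) ≤ n := by
  refine opt_le_s3 k T n _ n (fun i => advOffset T n i % n) (fun i _ => Nat.mod_lt _ hn) fun b => ?_
  have p (F : ℕ → ℕ) (x : ℕ) (hF : ∀ j < T, F (0 + j) = x) :=
    piece_le (fun i => advOffset T n i % n) F 0 T n 1 x b (by omega)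
      (fun j hj => by simp only [advOffset_zero hj]) hF
  have q (F : ℕ → ℕ) (x : ℕ) (hF : ∀ j < n, F (T + j) = x) :=
    piece_le (fun i => advOffset T n i % n) F T n n 1 x b (by omega)
      (fun j hj => by simp only [advOffset_one hj]) hF
  have r (F : ℕ → ℕ) (x : ℕ) (hF : ∀ j < n, F (T + n + j) = x) :=
    piece_le (fun i => advOffset T n i % n) F (T + n) n n 1 x b (by omega)
      (fun j hj => by simp only [advOffset_two hj]) hF
  have s (F : ℕ → ℕ) (x : ℕ) (hF : ∀ j < n, F (T + n + n + j) = x) :=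
    piece_le (fun i => advOffset T n i % n) F (T + n + n) n n 1 x b (by omega)
      (fun j _ => by simp only [advOffset_three]) hF
  have a := p (fun _ => 1) 1 (fun _ _ => rfl)
  have a' := p _ 1 (fun _ hj => advUnits_zero (n := n) hj)
  have d := q (fun _ => 1) 1 (fun _ _ => rfl)
  have d' := q _ 30 (fun _ hj => advUnits_one hj)
  have e := r (fun _ => 1) 1 (fun _ _ => rfl)
  have e' := r _ 68 (fun _ hj => advUnits_two hj)
  have f := s (fun _ => 1) 1 (fun _ _ => rfl)
  have f' := s _ 101 (fun _ _ => advUnits_three)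
  simp only [zero_add] at a a'
  iterate 6 rw [Finset.sum_range_add]
  constructor <;> omega

/-! ### The weighting argument -/

/-- Weight of item number `i`: `1` in the first two batches and `2` in the last two. -/
def advWeight (T n i : ℕ) : ℕ := if i < T + n then 1 else 2

/-- The dual constraint: the weight of a feasible bin is at most the total multiplier of the
stopping times at which the bin is open; the last `2` stands for the final stopping time, at which
every bin counts. -/
lemma bin_weight (k T n : ℕ) (hk : k = 7 ∨ k = 8) (g : ℕ → ℕ) (b : ℕ)
    (hc : (∑ i ∈ Finset.range (T + n + n + n), if g i = b then 1 else 0) ≤ k)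
    (hs : (∑ i ∈ Finset.range (T + n + n + n), if g i = b then advUnits T n i else 0) ≤ 200) :
    (∑ i ∈ (Finset.range (T + n + n + n)).filter (fun i => g i = b), advWeight T n i) ≤
      (k - 4) * (if b ∈ (Finset.range T).image g then 1 else 0)
      + 2 * (if b ∈ (Finset.range (T + n)).image g then 1 else 0)
      + 2 * (if b ∈ (Finset.range (T + n + n)).image g then 1 else 0) + 2 := by
  rw [← Finset.sum_filter] at hc hs
  set S := (Finset.range (T + n + n + n)).filter (fun i => g i = b) with hS
  have hSb : ∀ i ∈ S, g i = b := fun i hi => (Finset.mem_filter.1 hi).2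
  have key (x₁ x₂ x₃ x₄ : ℕ) (F : ℕ → ℕ) (hF : ∀ i, F i = if i < T then x₁ else
      if i < T + n then x₂ else if i < T + n + n then x₃ else x₄) :
      ∑ i ∈ S, F i = x₁ * ∑ i ∈ S, (if i < T then 1 else 0)
        + x₂ * ∑ i ∈ S, (if ¬ i < T ∧ i < T + n then 1 else 0)
        + x₃ * ∑ i ∈ S, (if ¬ i < T + n ∧ i < T + n + n then 1 else 0)
        + x₄ * ∑ i ∈ S, (if ¬ i < T + n + n then 1 else 0) := by
    simp only [Finset.mul_sum]
    rw [← Finset.sum_add_distrib, ← Finset.sum_add_distrib, ← Finset.sum_add_distrib]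
    refine Finset.sum_congr rfl fun i _ => ?_
    rw [hF i]
    split_ifs <;> omega
  have kc := key 1 1 1 1 (fun _ => 1) (fun i => by split_ifs <;> rfl)
  have ks := key 1 30 68 101 (advUnits T n) (fun i => rfl)
  have kw := key 1 1 2 2 (advWeight T n) (fun i => by unfold advWeight; split_ifs <;> omega)
  rw [kc] at hc
  rw [ks] at hs
  rw [kw]
  have hp (P : ℕ → Prop) [DecidablePred P] (m : ℕ) (hP : ∀ i, P i → i < m)
      (hm : b ∉ (Finset.range m).image g) : ∑ i ∈ S, (if P i then 1 else 0) = 0 := by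
    refine Finset.sum_eq_zero fun i hi => if_neg fun hPi => hm ?_
    exact Finset.mem_image.2 ⟨i, Finset.mem_range.2 (hP i hPi), hSb i hi⟩
  have h₁ := hp (fun i => i < T) T (fun i h => h)
  have h₂ := hp (fun i => ¬ i < T ∧ i < T + n) (T + n) (fun i h => h.2)
  have h₃ := hp (fun i => ¬ i < T + n ∧ i < T + n + n) (T + n + n) (fun i h => h.2)
  beta_reduce at h₁ h₂ h₃
  have m₁ : b ∈ (Finset.range T).image g → b ∈ (Finset.range (T + n)).image g := fun h =>
    Finset.image_subset_image (Finset.range_subset_range.2 (by omega)) h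
  have m₂ : b ∈ (Finset.range (T + n)).image g → b ∈ (Finset.range (T + n + n)).image g := fun h =>
    Finset.image_subset_image (Finset.range_subset_range.2 (by omega)) h
  generalize ∑ i ∈ S, (if i < T then 1 else 0) = p₁ at *
  generalize ∑ i ∈ S, (if ¬ i < T ∧ i < T + n then 1 else 0) = p₂ at *
  generalize ∑ i ∈ S, (if ¬ i < T + n ∧ i < T + n + n then 1 else 0) = p₃ at *
  generalize ∑ i ∈ S, (if ¬ i < T + n + n then 1 else 0) = p₄ at *
  by_cases b₁ : b ∈ (Finset.range T).image g
  · rw [if_pos b₁, if_pos (m₁ b₁), if_pos (m₂ (m₁ b₁))]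
    omega
  by_cases b₂ : b ∈ (Finset.range (T + n)).image g
  · have := h₁ b₁
    rw [if_neg b₁, if_pos b₂, if_pos (m₂ b₂)]
    omega
  have := h₁ b₁
  have := h₂ b₂
  by_cases b₃ : b ∈ (Finset.range (T + n + n)).image g
  · rw [if_neg b₁, if_neg b₂, if_pos b₃]
    omega
  · have := h₃ b₃
    rw [if_neg b₁, if_neg b₂, if_neg b₃]
    omega

/-- Weak duality, for an arbitrary feasible assignment `g` of the items to bins. -/
lemma weighted_bins (k T n : ℕ) (hk : k = 7 ∨ k = 8) (g : ℕ → ℕ)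
    (hf : ∀ b, (∑ i ∈ Finset.range (T + n + n + n), if g i = b then 1 else 0) ≤ k ∧
      (∑ i ∈ Finset.range (T + n + n + n), if g i = b then advUnits T n i else 0) ≤ 200) :
    T + 5 * n ≤ (k - 4) * ((Finset.range T).image g).card
      + 2 * ((Finset.range (T + n)).image g).card
      + 2 * ((Finset.range (T + n + n)).image g).card
      + 2 * ((Finset.range (T + n + n + n)).image g).card := by
  have hw : ∑ i ∈ Finset.range (T + n + n + n), advWeight T n i = T + 5 * n := by
    have e : T + n + n + n = (T + n) + (n + n) := by omega
    have e₁ : ∑ i ∈ Finset.range (T + n), advWeight T n i = ∑ i ∈ Finset.range (T + n), 1 :=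
      Finset.sum_congr rfl fun i hi => if_pos (Finset.mem_range.1 hi)
    have e₂ : ∑ i ∈ Finset.range (n + n), advWeight T n (T + n + i)
        = ∑ i ∈ Finset.range (n + n), 2 :=
      Finset.sum_congr rfl fun i _ => if_neg (by omega)
    rw [e, Finset.sum_range_add, e₁, e₂, Finset.sum_const, Finset.sum_const, Finset.card_range,
      Finset.card_range, smul_eq_mul, smul_eq_mul]
    omega
  obtain ⟨B, hB⟩ : ∃ B, B = (Finset.range (T + n + n + n)).image g := ⟨_, rfl⟩
  have hcard (m : ℕ) (hm : m ≤ T + n + n + n) :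
      ∑ b ∈ B, (if b ∈ (Finset.range m).image g then 1 else 0) =
        ((Finset.range m).image g).card := by
    rw [← Finset.card_filter, Finset.filter_mem_eq_inter, Finset.inter_eq_right.2]
    rw [hB]
    exact Finset.image_subset_image (Finset.range_subset_range.2 hm)
  rw [← hB, ← hw, ← Finset.sum_fiberwise_of_maps_to (t := B)
    (fun i hi => hB ▸ Finset.mem_image_of_mem g hi)]
  refine (Finset.sum_le_sum fun b _ =>
    bin_weight k T n hk g b (hf b).1 (hf b).2).trans (le_of_eq ?_)
  rw [Finset.sum_add_distrib, Finset.sum_add_distrib, Finset.sum_add_distrib, ← Finset.mul_sum,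
    ← Finset.mul_sum, ← Finset.mul_sum, hcard _ (by omega), hcard _ (by omega),
    hcard _ (by omega), Finset.sum_const, smul_eq_mul]
  omega

/-- The final averaging: bounds `bᵢ < R * oᵢ` at all four stopping times contradict weak duality.
Here `k = j + 6`. -/
lemma ratio_contradiction (j q R b₁ b₂ b₃ b₄ : ℝ) (hj : 0 ≤ j)
    (hR : R = ((j + 6) ^ 2 + 24 * (j + 6)) / ((j + 6) ^ 2 + 10 * (j + 6) + 24))
    (u₁ : b₁ < R * (j * q)) (u₂ : b₂ < R * ((j + 6) * q)) (u₃ : b₃ < R * (3 * ((j + 6) * q)))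
    (u₄ : b₄ < R * (6 * ((j + 6) * q)))
    (hW : j * ((j + 6) * q) + 5 * (6 * ((j + 6) * q)) ≤
      (j + 2) * b₁ + 2 * b₂ + 2 * b₃ + 2 * b₄) : False := by
  have hRe : R * ((j + 6) ^ 2 + 10 * (j + 6) + 24) = (j + 6) ^ 2 + 24 * (j + 6) := by
    rw [hR]
    exact div_mul_cancel₀ _ (by positivity)
  have hRq : R * ((j + 6) ^ 2 + 10 * (j + 6) + 24) * q = ((j + 6) ^ 2 + 24 * (j + 6)) * q := by
    rw [hRe]
  have v₁ := mul_lt_mul_of_pos_left u₁ (show (0 : ℝ) < j + 2 by positivity)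
  linarith

/-- For k ∈ {7, 8}, the asymptotic competitive ratio of every
deterministic online algorithm is at least (k² + 24k)/(k² + 10k + 24). -/
theorem online_asymp_lb_k78 (k : ℕ) (hk : k = 7 ∨ k = 8)
    (A : List ℝ → ℕ) (hA : OnlineValid k A) :
    ∀ ε : ℝ, 0 < ε → ∀ N : ℕ, ∃ L : List ℝ, ValidInput L ∧ N ≤ OPT k L ∧
      (((k : ℝ) ^ 2 + 24 * k) / ((k : ℝ) ^ 2 + 10 * k + 24) - ε) * (OPT k L : ℝ)
        ≤ (onlineBins A L : ℝ) := by
  intro ε hε N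
  -- `k = j + 6`; the first batch has `T = j * M` items and the others `n = 6 * M`, with `M = k * q`.
  obtain ⟨j, rfl⟩ : ∃ j, k = j + 6 := ⟨k - 6, by omega⟩
  have hj : j = 1 ∨ j = 2 := by omega
  obtain ⟨q, hq⟩ : ∃ q, q = N + 1 := ⟨_, rfl⟩
  obtain ⟨M, hM⟩ : ∃ M, M = (j + 6) * q := ⟨_, rfl⟩
  obtain ⟨T, hT⟩ : ∃ T, T = j * M := ⟨_, rfl⟩
  obtain ⟨n, hn⟩ : ∃ n, n = 6 * M := ⟨_, rfl⟩
  have hM0 : 0 < M := hM ▸ Nat.mul_pos (by omega) (by omega)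
  have hjM : M ≤ j * M := Nat.le_mul_of_pos_left _ (by omega)
  have hjM' : j * M ≤ 2 * M := Nat.mul_le_mul_right _ (by omega)
  have hfe (m : ℕ) : IsFeasible (j + 6) (advList T n m) (fun i => advBin A T n i.1) := by
    rw [← onlinePacking_advList]
    exact hA _ (advList_valid T n m)
  have hbins (m : ℕ) : onlineBins A (advList T n m) =
      ((Finset.range m).image (advBin A T n)).card := by
    rw [onlineBins, onlinePacking_advList, binsUsed_eq]
  have hlow (m : ℕ) (hm : T ≤ m) : N ≤ OPT (j + 6) (advList T n m) := by
    refine le_opt _ _ (by omega) _ ⟨_, hfe m⟩ ?_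
    rw [advList_length]
    have : (j + 6) * N ≤ M := hM ▸ Nat.mul_le_mul_left _ (by omega)
    omega
  have hW := weighted_bins (j + 6) T n hk _ ((feasible_iff _ _ _ _ _).1 (hfe (T + n + n + n)))
  have o₁ : OPT (j + 6) (advList T n T) ≤ j * q :=
    opt_stage_one _ _ _ _ (j + 6) (Nat.mul_pos (by omega) (by omega)) (le_of_eq (by rw [hT, hM]; ring)) (by omega)
      (by omega)
  have o₂ : OPT (j + 6) (advList T n (T + n)) ≤ M :=
    opt_stage_two _ _ _ _ j 6 hM0 hT.le hn.le le_rfl (by omega)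
  have o₃ : OPT (j + 6) (advList T n (T + n + n)) ≤ 3 * M :=
    opt_stage_three _ _ _ _ 1 2 2 (by omega) (by omega) (by omega) (by omega) (by omega) (by omega)
  have o₄ : OPT (j + 6) (advList T n (T + n + n + n)) ≤ 6 * M :=
    (opt_stage_four _ _ _ (by omega) (by omega) (by omega)).trans hn.le
  rw [← hbins, ← hbins, ← hbins, ← hbins] at hW
  by_contra! hcon
  have c₁ := hcon _ (advList_valid T n T) (hlow _ le_rfl)
  have c₂ := hcon _ (advList_valid T n (T + n)) (hlow _ (by omega))
  have c₃ := hcon _ (advList_valid T n (T + n + n)) (hlow _ (by omega))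
  have c₄ := hcon _ (advList_valid T n (T + n + n + n)) (hlow _ (by omega))
  obtain ⟨R, hR⟩ : ∃ R : ℝ, R = (((j + 6 : ℕ) : ℝ) ^ 2 + 24 * ((j + 6 : ℕ) : ℝ)) /
    (((j + 6 : ℕ) : ℝ) ^ 2 + 10 * ((j + 6 : ℕ) : ℝ) + 24) := ⟨_, rfl⟩
  rw [← hR] at c₁ c₂ c₃ c₄
  have hR0 : 0 ≤ R := hR ▸ by positivity
  have up (b o c : ℕ) (h : (b : ℝ) < (R - ε) * o) (ho : o ≤ c) : (b : ℝ) < R * c := by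
    have h1 : (R - ε) * o ≤ R * o := mul_le_mul_of_nonneg_right (by linarith) (by positivity)
    have h2 : R * o ≤ R * c := mul_le_mul_of_nonneg_left (by exact_mod_cast ho) hR0
    linarith
  have u₁ := up _ _ _ c₁ o₁
  have u₂ := up _ _ _ c₂ o₂
  have u₃ := up _ _ _ c₃ o₃
  have u₄ := up _ _ _ c₄ o₄
  have hkj : j + 6 - 4 = j + 2 := by omega
  rw [hkj] at hW
  generalize onlineBins A (advList T n T) = b₁ at hW u₁
  generalize onlineBins A (advList T n (T + n)) = b₂ at hW u₂
  generalize onlineBins A (advList T n (T + n + n)) = b₃ at hW u₃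
  generalize onlineBins A (advList T n (T + n + n + n)) = b₄ at hW u₄
  rw [hT, hn, hM] at hW
  rw [hM] at u₂ u₃ u₄
  have hW' := (Nat.cast_le (α := ℝ)).2 hW
  push_cast at hW' u₁ u₂ u₃ u₄ hR
  exact ratio_contradiction j q R b₁ b₂ b₃ b₄ (by positivity) hR u₁ u₂ u₃ u₄ hW'
end
end

section
/- For k ∈ {10, 11} and every deterministic online algorithm A for bin packing with cardinality constraint k, the asymptotic competitive ratio of A is at least (k² + 84k)/(k² + 48k + 36): for every ε > 0 and every N there exists an input L with OPT(L) ≥ N and A(L) ≥ ((k² + 84k)/(k² + 48k + 36) − ε)·OPT(L). This value equals 235/154 for k = 10 and 209/137 for k = 11. -/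
/-!
The bound holds with room to spare, because an adaptive adversary forces the ratio `2k/(k+1)`, which
is `20/11` for `k = 10` and `11/6` for `k = 11`.

The adversary first issues `n` tiny items. Each size is fixed before the item is packed, but
by bisection on the exponent (`exists_adaptive_list`) the sizes can be steered so that, in
hindsight, every item which opened a new bin (a *large* item) is more than `k - 1` times as big as
every item which did not (a *small* item). Thus every bin of the algorithm contains a large item.
Next come `h` huge items, of size exactly `1` minus `k - 1` times the bound on small sizes. A huge
item fits with `k - 1` small items but with no large one and no other huge one, so the algorithm
opens a new bin for each of them (`firsts_add_huge_le_onlineBins`).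

Let `X` be the number of large items and choose `h = ⌈(n - X)/(k - 1)⌉`. The algorithm uses at least
`X + h` bins, whereas a packing which puts `k - 1` small items with each huge item, and the large
items `k` to a bin, uses at most `h + ⌈X/k⌉` (`OPT_le_of_classes`). Since a bin holds at most `k`
items, `n ≤ k X`, hence `h ≤ X + 1`, and the ratio follows by arithmetic.
-/

open scoped Classical
noncomputable section

/-! ### Adaptive choice of the tiny sizes -/

/-- The last item of the list `l` is packed by `A` into a bin not used by any earlier item. -/
def OpensBin (A : List ℝ → ℕ) (l : List ℝ) : Prop :=
  ∀ j, j + 1 < l.length → A (l.take (j + 1)) ≠ A l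

/-- Adaptive choice of sizes by bisection. For any predicate `P` on prefixes there is a continuation
`M` of `L` and a threshold exponent `q` such that items whose prefix satisfies `P` have size at
least `x ^ q`, and all other items have size at most `x ^ (q + 1)`. The invariant is that the
threshold is still free to lie anywhere in `[p, p + 2 ^ r)`, where `r` items remain. -/
lemma exists_adaptive_list (P : List ℝ → Prop) (x : ℝ) (hx0 : 0 < x) (hx1 : x ≤ 1) (r : ℕ) :
    ∀ (p : ℕ) (L : List ℝ), ∃ (M : List ℝ) (q : ℕ), M.length = r ∧ p ≤ q ∧ q + 1 ≤ p + 2 ^ r ∧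
      (∀ i (hi : i < M.length), 0 < M[i] ∧ M[i] ≤ x ^ p ∧
        (P (L ++ M.take (i + 1)) → x ^ q ≤ M[i]) ∧
        (¬ P (L ++ M.take (i + 1)) → M[i] ≤ x ^ (q + 1))) := by
  induction r with
  | zero =>
    intro p L
    exact ⟨[], p, rfl, le_rfl, by simp, by simp⟩
  | succ r ih =>
    intro p L
    have hpow : 2 ^ (r + 1) = 2 ^ r + 2 ^ r := by ring
    have hanti : ∀ {a b : ℕ}, a ≤ b → x ^ b ≤ x ^ a :=
      fun h => pow_le_pow_of_le_one hx0.le hx1 h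
    by_cases hP : P (L ++ [x ^ (p + 2 ^ r)])
    · obtain ⟨M, q, hl, hpq, hq, hM⟩ := ih (p + 2 ^ r) (L ++ [x ^ (p + 2 ^ r)])
      refine ⟨x ^ (p + 2 ^ r) :: M, q, by simp [hl], by omega, by omega, ?_⟩
      rintro (_ | i) hi
      · refine ⟨by simpa using pow_pos hx0 _, ?_, fun _ => ?_, fun h => ?_⟩
        · simpa using hanti (Nat.le_add_right p (2 ^ r))
        · simpa using hanti hpq
        · exact absurd (by simpa using hP) h
      · obtain ⟨h1, h2, h3, h4⟩ := hM i (by simpa using hi)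
        simp only [List.append_assoc, List.singleton_append] at h3 h4
        simp only [List.getElem_cons_succ, List.take_succ_cons]
        exact ⟨h1, h2.trans (hanti (Nat.le_add_right p (2 ^ r))), h3, h4⟩
    · obtain ⟨M, q, hl, hpq, hq, hM⟩ := ih p (L ++ [x ^ (p + 2 ^ r)])
      refine ⟨x ^ (p + 2 ^ r) :: M, q, by simp [hl], by omega, by omega, ?_⟩
      rintro (_ | i) hi
      · refine ⟨by simpa using pow_pos hx0 _, ?_, fun h => ?_, fun _ => ?_⟩
        · simpa using hanti (Nat.le_add_right p (2 ^ r))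
        · exact absurd (by simpa using h) hP
        · simpa using hanti hq
      · obtain ⟨h1, h2, h3, h4⟩ := hM i (by simpa using hi)
        simp only [List.append_assoc, List.singleton_append] at h3 h4
        simp only [List.getElem_cons_succ, List.take_succ_cons]
        exact ⟨h1, h2, h3, h4⟩

/-! ### Bounds on the optimum -/

lemma OPT_le_binsUsed {k : ℕ} {L : List ℝ} {f : Fin L.length → ℕ} (hf : IsFeasible k L f) :
    OPT k L ≤ binsUsed L f :=
  Nat.sInf_le ⟨f, hf, rfl⟩

lemma length_le_mul_OPT {k : ℕ} {L : List ℝ} {f : Fin L.length → ℕ} (hf : IsFeasible k L f) :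
    L.length ≤ k * OPT k L := by
  have hne : {n | ∃ f : Fin L.length → ℕ, IsFeasible k L f ∧ binsUsed L f = n}.Nonempty :=
    ⟨_, f, hf, rfl⟩
  obtain ⟨g, hg, hgn⟩ := Nat.sInf_mem hne
  have h := Finset.card_le_mul_card_image (s := (Finset.univ : Finset (Fin L.length))) (f := g) k
    (fun b _ => (hg b).1)
  have h2 : OPT k L = binsUsed L g := hgn.symm
  rw [h2]
  simpa [binsUsed] using h

/-- A finite set can be cut into at most `c` groups of size at most `d` if it has at most `d * c`
elements. -/
lemma exists_grouping {ι : Type*} (S : Finset ι) (d c : ℕ) (h : S.card ≤ d * c) :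
    ∃ g : ι → ℕ, (∀ i ∈ S, g i < c) ∧ ∀ b, (S.filter (fun i => g i = b)).card ≤ d := by
  classical
  let e := S.equivFin
  refine ⟨fun i => if hi : i ∈ S then (e ⟨i, hi⟩ : ℕ) / d else 0, ?_, ?_⟩
  · intro i hi
    simp only [hi, dif_pos]
    apply Nat.div_lt_of_lt_mul
    exact (e ⟨i, hi⟩).2.trans_le h
  · intro b
    have hcard : (Finset.Ico (d * b) (d * b + d)).card = d := by simp
    refine le_trans ?_ hcard.le
    apply Finset.card_le_card_of_injOn (fun i => if hi : i ∈ S then (e ⟨i, hi⟩ : ℕ) else 0)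
    · intro i hi
      simp only [Finset.coe_filter, Set.mem_ofPred_eq] at hi
      obtain ⟨hS, hb⟩ := hi
      have hd : 0 < d := by
        rcases Nat.eq_zero_or_pos d with h0 | h0
        · have := (e ⟨i, hS⟩).2
          simp [h0] at h
          simp [h] at hS
        · exact h0
      simp only [hS, dif_pos] at hb ⊢
      have h1 := Nat.div_add_mod (e ⟨i, hS⟩ : ℕ) d
      have h2 := Nat.mod_lt (e ⟨i, hS⟩ : ℕ) hd
      rw [hb] at h1
      simp only [Finset.coe_Ico, Set.mem_Ico]
      omega
    · intro i hi j hj hij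
      simp only [Finset.coe_filter, Set.mem_ofPred_eq] at hi hj
      simp only [hi.1, hj.1, dif_pos] at hij
      have := e.injective (Fin.ext hij)
      simpa using this

/-- If the items split into large items (size at most `1/k`), small items (size at most `s`) and
at most `h` huge items (size at most `1 - (k-1)s`), with at most `(k-1)h` small and at most `kc` large
ones, then `h + c` bins suffice: the even bins take small and huge items, the odd ones large
items. -/
lemma OPT_le_of_classes {k : ℕ} (hk : 1 ≤ k) (L : List ℝ) (T S H : Finset (Fin L.length))
    (hcov : ∀ i, i ∈ T ∨ i ∈ S ∨ i ∈ H) (s : ℝ) (hs : 0 ≤ s) (hs1 : ((k : ℝ) - 1) * s ≤ 1)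
    (hT : ∀ i ∈ T, L.get i ≤ 1 / k) (hS : ∀ i ∈ S, L.get i ≤ s)
    (hTS : Disjoint T S) (hTH : Disjoint T H) (hSH : Disjoint S H)
    (hH : ∀ i ∈ H, L.get i ≤ 1 - ((k : ℝ) - 1) * s)
    (h c : ℕ) (hHc : H.card ≤ h) (hSc : S.card ≤ (k - 1) * h) (hTc : T.card ≤ k * c) :
    OPT k L ≤ h + c := by
  obtain ⟨gT, hgT, hgT'⟩ := exists_grouping T k c hTc
  obtain ⟨gS, hgS, hgS'⟩ := exists_grouping S (k - 1) h hSc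
  obtain ⟨gH, hgH, hgH'⟩ := exists_grouping H 1 h (by simpa using hHc)
  let f : Fin L.length → ℕ := fun i =>
    if i ∈ T then 2 * gT i + 1 else if i ∈ S then 2 * gS i else 2 * gH i
  have fT : ∀ i ∈ T, f i = 2 * gT i + 1 := fun i hi => by simp [f, hi]
  have fS : ∀ i ∈ S, f i = 2 * gS i := fun i hi => by
    simp [f, hi, Finset.disjoint_right.1 hTS hi]
  have fH : ∀ i ∈ H, f i = 2 * gH i := fun i hi => by
    simp [f, Finset.disjoint_right.1 hTH hi, Finset.disjoint_right.1 hSH hi]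
  have hk0 : (0 : ℝ) < k := by exact_mod_cast hk
  have hfeas : IsFeasible k L f := by
    intro b
    rcases Nat.even_or_odd' b with ⟨q, rfl | rfl⟩
    · have heq : Finset.univ.filter (fun i => f i = 2 * q) =
          S.filter (fun i => gS i = q) ∪ H.filter (fun i => gH i = q) := by
        ext i
        simp only [Finset.mem_filter, Finset.mem_univ, true_and, Finset.mem_union]
        constructor
        · intro hi
          rcases hcov i with h1 | h1 | h1
          · rw [fT i h1] at hi; omega
          · rw [fS i h1] at hi; exact Or.inl ⟨h1, by omega⟩
          · rw [fH i h1] at hi; exact Or.inr ⟨h1, by omega⟩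
        · rintro (⟨h1, h2⟩ | ⟨h1, h2⟩)
          · rw [fS i h1, h2]
          · rw [fH i h1, h2]
      rw [heq]
      have c1 := hgS' q
      have c2 := hgH' q
      have c1' : ((S.filter (fun i => gS i = q)).card : ℝ) ≤ (k : ℝ) - 1 := by
        rw [← Nat.cast_one, ← Nat.cast_sub hk]
        exact_mod_cast c1
      have c2' : ((H.filter (fun i => gH i = q)).card : ℝ) ≤ 1 := by exact_mod_cast c2
      refine ⟨(Finset.card_union_le _ _).trans (by omega), ?_⟩
      rw [Finset.sum_union (hSH.mono (Finset.filter_subset _ _) (Finset.filter_subset _ _))]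
      have e1 : ∑ i ∈ S.filter (fun i => gS i = q), L.get i ≤ ((k : ℝ) - 1) * s := by
        refine (Finset.sum_le_card_nsmul _ _ s
          (fun i hi => hS i (Finset.mem_filter.1 hi).1)).trans ?_
        rw [nsmul_eq_mul]
        gcongr
      have e2 : ∑ i ∈ H.filter (fun i => gH i = q), L.get i ≤ 1 - ((k : ℝ) - 1) * s := by
        refine (Finset.sum_le_card_nsmul _ _ (1 - ((k : ℝ) - 1) * s)
          (fun i hi => hH i (Finset.mem_filter.1 hi).1)).trans ?_
        rw [nsmul_eq_mul]
        exact mul_le_of_le_one_left (by linarith) c2'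
      linarith
    · have heq : Finset.univ.filter (fun i => f i = 2 * q + 1) =
          T.filter (fun i => gT i = q) := by
        ext i
        simp only [Finset.mem_filter, Finset.mem_univ, true_and]
        constructor
        · intro hi
          rcases hcov i with h1 | h1 | h1
          · rw [fT i h1] at hi; exact ⟨h1, by omega⟩
          · rw [fS i h1] at hi; omega
          · rw [fH i h1] at hi; omega
        · rintro ⟨h1, h2⟩
          rw [fT i h1, h2]
      rw [heq]
      refine ⟨hgT' q, ?_⟩
      refine (Finset.sum_le_card_nsmul _ _ (1 / (k : ℝ))
        (fun i hi => hT i (Finset.mem_filter.1 hi).1)).trans ?_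
      have c1 : ((T.filter (fun i => gT i = q)).card : ℝ) ≤ k := by exact_mod_cast hgT' q
      rw [nsmul_eq_mul, mul_one_div]
      exact (div_le_one hk0).2 c1
  refine (OPT_le_binsUsed hfeas).trans ?_
  have hsub : Finset.univ.image f ⊆
      (Finset.range h).image (fun q => 2 * q) ∪ (Finset.range c).image (fun q => 2 * q + 1) := by
    intro b hb
    obtain ⟨i, -, rfl⟩ := Finset.mem_image.1 hb
    simp only [Finset.mem_union, Finset.mem_image, Finset.mem_range]
    rcases hcov i with h1 | h1 | h1
    · exact Or.inr ⟨_, hgT i h1, (fT i h1).symm⟩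
    · exact Or.inl ⟨_, hgS i h1, (fS i h1).symm⟩
    · exact Or.inl ⟨_, hgH i h1, (fH i h1).symm⟩
  refine (Finset.card_le_card hsub).trans ((Finset.card_union_le _ _).trans ?_)
  gcongr
  · exact Finset.card_image_le.trans (by simp)
  · exact Finset.card_image_le.trans (by simp)

/-! ### Lower bound on the bins of the online algorithm -/

lemma opensBin_take_iff (A : List ℝ → ℕ) (L : List ℝ) (i : Fin L.length) :
    OpensBin A (L.take (i.1 + 1)) ↔
      ∀ j : Fin L.length, j < i → onlinePacking A L j ≠ onlinePacking A L i := by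
  have hi := i.2
  constructor
  · intro h j hj
    have hj' : j.1 < i.1 := hj
    have := h j.1 (by rw [List.length_take]; omega)
    rwa [List.take_take, min_eq_left (by omega)] at this
  · intro h j hj
    rw [List.length_take] at hj
    have := h ⟨j, by omega⟩ (by rw [Fin.lt_def]; simp; omega)
    rwa [List.take_take, min_eq_left (by omega)]

/-- Two items that do not fit together are in different bins. -/
lemma ne_of_one_lt_add {k : ℕ} {L : List ℝ} {f : Fin L.length → ℕ} (hf : IsFeasible k L f)
    (hL : ValidInput L) {i j : Fin L.length} (hij : i ≠ j) (h : 1 < L.get i + L.get j) :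
    f i ≠ f j := by
  intro he
  have h1 := (hf (f j)).2
  have h2 : ∑ l ∈ {i, j}, L.get l ≤ ∑ l ∈ Finset.univ.filter (fun l => f l = f j), L.get l := by
    apply Finset.sum_le_sum_of_subset_of_nonneg
    · intro l hl
      rcases Finset.mem_insert.1 hl with rfl | hl
      · simpa using he
      · rw [Finset.mem_singleton.1 hl]; simp
    · intro l _ _
      exact (hL _ (List.get_mem _ _)).1.le
  rw [Finset.sum_pair hij] at h2
  linarith

/-- Huge items go to bins of their own, also disjoint from the bins opened by large items. -/
lemma firsts_add_huge_le_onlineBins {k : ℕ} {A : List ℝ → ℕ} (hA : OnlineValid k A) {L : List ℝ}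
    (hL : ValidInput L) (T H : Finset (Fin L.length)) (hTH : Disjoint T H) (a y : ℝ)
    (hT : ∀ i ∈ T, OpensBin A (L.take (i.1 + 1)) ∧ a ≤ L.get i) (hH : ∀ i ∈ H, y ≤ L.get i)
    (hay : 1 < a + y) (hyy : 1 < y + y) :
    T.card + H.card ≤ onlineBins A L := by
  have hf := hA L hL
  rw [← Finset.card_union_of_disjoint hTH, onlineBins, binsUsed]
  rw [← Finset.card_image_of_injOn (s := T ∪ H) (f := onlinePacking A L)]
  · exact Finset.card_le_card (Finset.image_subset_image (Finset.subset_univ _))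
  · intro i hi j hj he
    by_contra hij
    simp only [Finset.coe_union, Set.mem_union, Finset.mem_coe] at hi hj
    rcases hi with hi | hi <;> rcases hj with hj | hj
    · rcases lt_or_gt_of_ne hij with hlt | hlt
      · exact (opensBin_take_iff A L j).1 (hT j hj).1 i hlt he
      · exact (opensBin_take_iff A L i).1 (hT i hi).1 j hlt he.symm
    · exact ne_of_one_lt_add hf hL hij (by linarith [(hT i hi).2, hH j hj]) he
    · exact ne_of_one_lt_add hf hL hij (by linarith [(hT j hj).2, hH i hi]) he
    · exact ne_of_one_lt_add hf hL hij (by linarith [hH j hj, hH i hi]) he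

/-- Among the first `n` items, every one shares its bin with an item that opened it, and a bin has
room for `k` items only. -/
lemma tiny_le_mul_firsts {k : ℕ} {A : List ℝ → ℕ} (hA : OnlineValid k A) {L : List ℝ}
    (hL : ValidInput L) (n : ℕ) :
    (Finset.univ.filter (fun i : Fin L.length => i.1 < n)).card ≤
      k * (Finset.univ.filter (fun i : Fin L.length =>
        i.1 < n ∧ OpensBin A (L.take (i.1 + 1)))).card := by
  have hf := hA L hL
  set f := onlinePacking A L with hfdef
  have h1 := Finset.card_le_mul_card_image
    (s := Finset.univ.filter (fun i : Fin L.length => i.1 < n)) (f := f) k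
    (fun b _ => (Finset.card_le_card
      (Finset.filter_subset_filter _ (Finset.subset_univ _))).trans (hf b).1)
  refine h1.trans (Nat.mul_le_mul_left _ ?_)
  refine le_trans (Finset.card_le_card ?_) (Finset.card_image_le (f := f))
  intro b hb
  obtain ⟨i, hi, rfl⟩ := Finset.mem_image.1 hb
  have hi' : i.1 < n := by simpa using hi
  -- the item opening the bin of `i` is the earliest item in that bin
  have hne : (Finset.univ.filter (fun j => f j = f i)).Nonempty := ⟨i, by simp⟩
  obtain ⟨m, hm, hmin⟩ := Finset.exists_minimal hne
  have hmf : f m = f i := by simpa using hm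
  have hle : ∀ j, f j = f i → m ≤ j := fun j hj => by
    rcases le_total m j with h | h
    · exact h
    · exact hmin (by simpa using hj) h
  refine Finset.mem_image.2 ⟨m, ?_, hmf⟩
  simp only [Finset.mem_filter, Finset.mem_univ, true_and]
  refine ⟨lt_of_le_of_lt (hle i rfl) hi', (opensBin_take_iff A L m).2 fun j hj he => ?_⟩
  exact absurd (hle j (he.trans hmf)) (not_le.2 hj)

/-! ### The adversary's input and its ratio -/

/-- The adversary's input: `n` tiny items, of which `X` open a bin, followed by `h` huge items. -/
lemma exists_adversary_input {k : ℕ} (hk : 3 ≤ k) {A : List ℝ → ℕ} (hA : OnlineValid k A)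
    (n : ℕ) : ∃ (L : List ℝ) (X h : ℕ), ValidInput L ∧ n ≤ L.length ∧ n ≤ k * X ∧
      (k - 1) * h + X ≤ n + (k - 2) ∧ X + h ≤ onlineBins A L ∧
      OPT k L ≤ h + (X + (k - 1)) / k := by
  have hk3 : (3 : ℝ) ≤ k := by exact_mod_cast hk
  have hk0 : (0 : ℝ) < k := by linarith
  have hx0 : (0 : ℝ) < 1 / k := by positivity
  have hx1 : (1 / k : ℝ) ≤ 1 := by rw [div_le_one hk0]; linarith
  obtain ⟨M, q, hMl, hq1, -, hM⟩ :=
    exists_adaptive_list (OpensBin A) (1 / k : ℝ) hx0 hx1 n 1 []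
  simp only [List.nil_append, pow_one] at hM
  set s : ℝ := (1 / k : ℝ) ^ (q + 1) with hs
  set a : ℝ := (1 / k : ℝ) ^ q with ha
  have hs0 : 0 < s := pow_pos hx0 _
  have hka : (k : ℝ) * s = a := by
    rw [hs, ha, pow_succ]; field_simp
  have ha1 : a ≤ 1 / k := by
    rw [ha]
    exact (pow_le_pow_of_le_one hx0.le hx1 hq1).trans_eq (pow_one _)
  have ha3 : a ≤ 1 / 3 := ha1.trans (by gcongr)
  set Sn := ((Finset.range n).filter (fun i => ¬ OpensBin A (M.take (i + 1)))).card with hSn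
  set h := (Sn + (k - 2)) / (k - 1) with hh
  set y : ℝ := 1 - ((k : ℝ) - 1) * s with hy
  have hya : 1 < a + y := by rw [hy]; linarith
  have hL : ValidInput (M ++ List.replicate h y) := by
    intro z hz
    rcases List.mem_append.1 hz with hz | hz
    · obtain ⟨i, hi, rfl⟩ := List.getElem_of_mem hz
      exact ⟨(hM i hi).1, (hM i hi).2.1.trans hx1⟩
    · rw [(List.mem_replicate.1 hz).2]
      have : 0 ≤ ((k : ℝ) - 1) * s := mul_nonneg (by linarith) hs0.le
      exact ⟨by linarith, by linarith⟩
  set L := M ++ List.replicate h y with hLdef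
  have hLl : L.length = n + h := by simp [hLdef, hMl]
  have hnL : n ≤ L.length := hLl ▸ Nat.le_add_right n h
  have htake : ∀ i, i < n → L.take (i + 1) = M.take (i + 1) := fun i hi => by
    rw [hLdef, List.take_append_of_le_length (by omega)]
  have hget1 : ∀ i : Fin L.length, ∀ hi : i.1 < n, L.get i = M[i.1]'(by omega) := fun i hi => by
    simp only [List.get_eq_getElem, hLdef]
    exact List.getElem_append_left _
  have hget2 : ∀ i : Fin L.length, n ≤ i.1 → L.get i = y := fun i hi => by
    simp only [List.get_eq_getElem, hLdef]
    rw [List.getElem_append_right (by omega), List.getElem_replicate]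
  let T := Finset.univ.filter (fun i : Fin L.length =>
    i.1 < n ∧ OpensBin A (L.take (i.1 + 1)))
  let S := Finset.univ.filter (fun i : Fin L.length =>
    i.1 < n ∧ ¬ OpensBin A (L.take (i.1 + 1)))
  let H := Finset.univ.filter (fun i : Fin L.length => n ≤ i.1)
  let I := Finset.univ.filter (fun i : Fin L.length => i.1 < n)
  have hTS : Disjoint T S := by
    rw [Finset.disjoint_left]; intro i hi hj
    simp only [T, S, Finset.mem_filter] at hi hj
    exact hj.2.2 hi.2.2
  have hTH : Disjoint T H := by
    rw [Finset.disjoint_left]; intro i hi hj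
    simp only [T, H, Finset.mem_filter] at hi hj
    omega
  have hSH : Disjoint S H := by
    rw [Finset.disjoint_left]; intro i hi hj
    simp only [S, H, Finset.mem_filter] at hi hj
    omega
  have hI : I.card = n := by
    have : I.map Fin.valEmbedding = Finset.range n := by
      ext i
      simp only [I, Finset.mem_map, Finset.mem_filter, Finset.mem_univ, true_and,
        Fin.valEmbedding_apply, Finset.mem_range]
      exact ⟨fun ⟨j, hj, e⟩ => e ▸ hj, fun hi => ⟨⟨i, hi.trans_le hnL⟩, hi, rfl⟩⟩
    rw [← Finset.card_map Fin.valEmbedding, this, Finset.card_range]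
  have hScard : S.card = Sn := by
    have : S.map Fin.valEmbedding =
        (Finset.range n).filter (fun i => ¬ OpensBin A (M.take (i + 1))) := by
      ext i
      simp only [S, Finset.mem_map, Finset.mem_filter, Finset.mem_univ, true_and,
        Fin.valEmbedding_apply, Finset.mem_range]
      constructor
      · rintro ⟨j, ⟨hj, hP⟩, rfl⟩
        rw [htake _ hj] at hP
        exact ⟨hj, hP⟩
      · rintro ⟨hi, hP⟩
        exact ⟨⟨i, hi.trans_le hnL⟩, ⟨hi, by rwa [htake _ hi]⟩, rfl⟩
    rw [← Finset.card_map Fin.valEmbedding, this]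
  have hTScard : T.card + S.card = n := by
    rw [← hI, ← Finset.card_union_of_disjoint hTS]
    congr 1
    ext i
    simp only [T, S, I, Finset.mem_union, Finset.mem_filter, Finset.mem_univ, true_and]
    tauto
  have hHcard : H.card = h := by
    have h1 := Finset.card_filter_add_card_filter_not (s := (Finset.univ : Finset (Fin L.length)))
      (fun i => i.1 < n)
    simp only [not_lt, Finset.card_univ, Fintype.card_fin] at h1
    have h2 : I.card + H.card = L.length := h1
    omega
  have hceil : Sn ≤ (k - 1) * h := by
    have h1 := Nat.div_add_mod (Sn + (k - 2)) (k - 1)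
    have h2 := Nat.mod_lt (Sn + (k - 2)) (show 0 < k - 1 by omega)
    rw [← hh] at h1
    omega
  have hfloor : (k - 1) * h ≤ Sn + (k - 2) := Nat.mul_div_le _ _
  refine ⟨L, T.card, h, hL, by omega, ?_, by omega, ?_, ?_⟩
  · have := tiny_le_mul_firsts hA hL n
    rwa [show (Finset.univ.filter (fun i : Fin L.length => i.1 < n)).card = n from hI] at this
  · rw [← hHcard]
    refine firsts_add_huge_le_onlineBins hA hL T H hTH a y ?_ ?_ hya ?_
    · intro i hi
      obtain ⟨-, hin, hP⟩ := Finset.mem_filter.1 hi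
      refine ⟨hP, ?_⟩
      rw [hget1 i hin]
      exact (hM i.1 (by omega)).2.2.1 (by rwa [htake _ hin] at hP)
    · intro i hi
      exact (hget2 i (Finset.mem_filter.1 hi).2).ge
    · linarith
  · refine OPT_le_of_classes (by omega) L T S H ?_ s hs0.le (by linarith) ?_ ?_ hTS hTH hSH ?_
      h _ hHcard.le (by omega) ?_
    · intro i
      simp only [T, S, H, Finset.mem_filter, Finset.mem_univ, true_and]
      by_cases h1 : i.1 < n
      · tauto
      · right; right; omega
    · intro i hi
      have hin := (Finset.mem_filter.1 hi).2.1
      rw [hget1 i hin]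
      exact (hM i.1 (by omega)).2.1
    · intro i hi
      obtain ⟨-, hin, hP⟩ := Finset.mem_filter.1 hi
      rw [hget1 i hin]
      exact (hM i.1 (by omega)).2.2.2 (by rwa [htake _ hin] at hP)
    · intro i hi
      exact (hget2 i (Finset.mem_filter.1 hi).2).le
    · have h1 := Nat.div_add_mod (T.card + (k - 1)) k
      have h2 := Nat.mod_lt (T.card + (k - 1)) (show 0 < k by omega)
      omega

/-- For k ∈ {10, 11}, the asymptotic competitive ratio of every
deterministic online algorithm is at least (k² + 84k)/(k² + 48k + 36). -/
theorem online_asymp_lb_k1011 (k : ℕ) (hk : k = 10 ∨ k = 11)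
    (A : List ℝ → ℕ) (hA : OnlineValid k A) :
    ∀ ε : ℝ, 0 < ε → ∀ N : ℕ, ∃ L : List ℝ, ValidInput L ∧ N ≤ OPT k L ∧
      (((k : ℝ) ^ 2 + 84 * k) / ((k : ℝ) ^ 2 + 48 * k + 36) - ε) * (OPT k L : ℝ)
        ≤ (onlineBins A L : ℝ) := by
  intro ε hε N
  have hk3 : 3 ≤ k := by omega
  obtain ⟨L, X, h, hL, hn, hX, hh, hALG, hOPT⟩ :=
    exists_adversary_input hk3 hA (k * (N + 20))
  have hlen := length_le_mul_OPT (hA L hL)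
  have hN : N + 20 ≤ OPT k L :=
    Nat.le_of_mul_le_mul_left (hn.trans hlen) (by omega)
  have hX20 : N + 20 ≤ X := Nat.le_of_mul_le_mul_left hX (by omega)
  refine ⟨L, hL, by omega, ?_⟩
  -- both values of the ratio, 235/154 and 209/137, are below 1.53
  have hR : ((k : ℝ) ^ 2 + 84 * k) / ((k : ℝ) ^ 2 + 48 * k + 36) ≤ 153 / 100 := by
    rcases hk with rfl | rfl <;> norm_num
  have hnat : 153 * OPT k L ≤ 100 * onlineBins A L := by
    rcases hk with rfl | rfl <;> omega
  have hreal : (153 : ℝ) * OPT k L ≤ 100 * onlineBins A L := by exact_mod_cast hnat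
  have hO : (0 : ℝ) ≤ OPT k L := Nat.cast_nonneg _
  calc _ ≤ (153 / 100 : ℝ) * OPT k L := by
        apply mul_le_mul_of_nonneg_right _ hO
        linarith
    _ ≤ _ := by linarith
end
end

section
/- Let k ≥ 2, let L be an input list, and let P be any feasible packing of L (in particular, an optimal packing). Then every bin of P contains at most one item that First Fit packs into a 1-bin (a bin of FF's final packing containing exactly one item). -/
/-!
Suppose items `i < j` lie in a common bin of a feasible packing, so that their sizes sum to at
most `1`, and that each is alone in its First Fit bin. Being alone, `i` opened its bin `p`, and
when `j` arrives that bin still holds exactly one item, of size `L.get i`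
(`getElem?_ffState_of_alone`). Since `2 ≤ k`, the bin `p` can receive `j`, so First Fit packs `j`
into some bin of index at most `p` (`ffFind_le`). All those bins are open, hence already hold an
item (`exists_ffAssign_of_lt`), which contradicts `j` being alone in its bin.
-/

open scoped Classical
noncomputable section

lemma ffUpdate_getElem?_of_ne (k : ℕ) (x : ℝ) (bs : List (ℕ × ℝ)) (m : ℕ)
    (hm : ffFind k x bs ≠ m) : (ffUpdate k x bs)[m]? = bs[m]? := by
  induction bs generalizing m with
  | nil => cases m <;> simp_all [ffFind, ffUpdate]
  | cons b bs ih =>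
    unfold ffFind at hm
    unfold ffUpdate
    split_ifs at hm ⊢ with h <;> cases m <;> simp_all

lemma ffUpdate_getElem?_of_new (k : ℕ) (x : ℝ) (bs : List (ℕ × ℝ))
    (h : bs[ffFind k x bs]? = none) : (ffUpdate k x bs)[ffFind k x bs]? = some (1, x) := by
  induction bs with
  | nil => simp [ffFind, ffUpdate]
  | cons b bs ih =>
    unfold ffFind at h ⊢
    unfold ffUpdate
    split_ifs at h ⊢ with hb
    · simp at h
    · rw [List.getElem?_cons_succ] at h ⊢
      exact ih h

/-- First Fit never skips a bin that can receive the item. -/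
lemma ffFind_le (k : ℕ) (x : ℝ) (bs : List (ℕ × ℝ)) (m : ℕ) (c : ℕ × ℝ)
    (hc : bs[m]? = some c) (hk : c.1 < k) (hx : c.2 + x ≤ 1) : ffFind k x bs ≤ m := by
  induction bs generalizing m with
  | nil => simp at hc
  | cons b bs ih =>
    unfold ffFind
    split_ifs with hb
    · exact Nat.zero_le m
    · cases m with
      | zero =>
        simp only [List.getElem?_cons_zero, Option.some.injEq] at hc
        subst hc
        exact absurd ⟨hk, hx⟩ hb
      | succ m => exact Nat.succ_le_succ (ih m (by simpa using hc))

lemma ffState_take_succ (k : ℕ) (L : List ℝ) (t : Fin L.length) :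
    ffState k (L.take (t.1 + 1)) = ffUpdate k (L.get t) (ffState k (L.take t.1)) := by
  unfold ffState
  rw [List.take_succ_eq_append_getElem t.2, List.foldl_append]
  rfl

/-- Every bin open after the first `t` items has received one of these items. -/
lemma exists_ffAssign_of_lt (k : ℕ) (L : List ℝ) (t : ℕ) (ht : t ≤ L.length) (m : ℕ)
    (hm : (ffState k (L.take t))[m]? ≠ none) :
    ∃ j : Fin L.length, j.1 < t ∧ ffAssign k L j = m := by
  induction t with
  | zero => simp [ffState] at hm
  | succ t ih =>
    by_cases h : ffAssign k L ⟨t, ht⟩ = m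
    · exact ⟨⟨t, ht⟩, Nat.lt_succ_self t, h⟩
    · rw [ffState_take_succ k L ⟨t, ht⟩, ffUpdate_getElem?_of_ne _ _ _ _ h] at hm
      obtain ⟨j, hj, hjm⟩ := ih (Nat.le_of_succ_le ht) hm
      exact ⟨j, Nat.lt_succ_of_lt hj, hjm⟩

/-- If `i` is alone in its First Fit bin, then at any time after its arrival that bin has
exactly one item, of total size `L.get i`. -/
lemma getElem?_ffState_of_alone (k : ℕ) (L : List ℝ) (i : Fin L.length)
    (hi : ∀ j, ffAssign k L j = ffAssign k L i → j = i) (t : ℕ) (hit : i.1 + 1 ≤ t)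
    (ht : t ≤ L.length) :
    (ffState k (L.take t))[ffAssign k L i]? = some (1, L.get i) := by
  induction t, hit using Nat.le_induction with
  | base =>
    rw [ffState_take_succ k L i]
    apply ffUpdate_getElem?_of_new
    -- If the bin were already open, an earlier item would share it with `i`.
    by_contra hopen
    obtain ⟨j, hj, hji⟩ := exists_ffAssign_of_lt k L i.1 i.2.le _ hopen
    have := hi j hji
    subst this
    exact lt_irrefl _ hj
  | succ t hit ih =>
    rw [ffState_take_succ k L ⟨t, ht⟩, ffUpdate_getElem?_of_ne, ih (Nat.le_of_succ_le ht)]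
    intro h
    have : (⟨t, ht⟩ : Fin L.length) = i := hi _ h
    subst this
    exact absurd hit (Nat.not_succ_le_self t)

/-- Two distinct items that are each alone in their First Fit bins do not fit together. -/
lemma one_lt_add_of_alone (k : ℕ) (hk : 2 ≤ k) (L : List ℝ) (i j : Fin L.length) (hij : i < j)
    (hi : ∀ l, ffAssign k L l = ffAssign k L i → l = i)
    (hj : ∀ l, ffAssign k L l = ffAssign k L j → l = j) :
    1 < L.get i + L.get j := by
  by_contra! hsum
  have hbin := getElem?_ffState_of_alone k L i hi j.1 hij j.2.le
  have hle : ffAssign k L j ≤ ffAssign k L i :=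
    ffFind_le k (L.get j) _ _ _ hbin hk hsum
  have hlt := (List.getElem?_eq_some_iff.mp hbin).1
  obtain ⟨l, hl, hlj⟩ := exists_ffAssign_of_lt k L j.1 j.2.le (ffAssign k L j) (by
    rw [List.getElem?_eq_getElem (hle.trans_lt hlt)]
    exact Option.some_ne_none _)
  have := hj l hlj
  subst this
  exact lt_irrefl _ hl

/-- Every bin of any feasible packing `f` of `L` contains at most one
item that First Fit packs into a 1-bin (a bin of FF's final packing with exactly
one item). -/
theorem ff_one_bins (k : ℕ) (hk : 2 ≤ k) (L : List ℝ) (hL : ValidInput L)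
    (f : Fin L.length → ℕ) (hf : IsFeasible k L f) (b : ℕ) :
    (Finset.univ.filter (fun i : Fin L.length => f i = b ∧
        (Finset.univ.filter
          (fun j : Fin L.length => ffAssign k L j = ffAssign k L i)).card = 1)).card
      ≤ 1 := by
  have alone : ∀ i : Fin L.length, (Finset.univ.filter
      (fun j : Fin L.length => ffAssign k L j = ffAssign k L i)).card = 1 →
      ∀ j, ffAssign k L j = ffAssign k L i → j = i := by
    intro i hi j hji
    exact Finset.card_le_one.mp hi.le j (by simpa using hji) i (by simp)
  have fits : ∀ i j : Fin L.length, f i = b → f j = b → i ≠ j →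
      L.get i + L.get j ≤ 1 := by
    intro i j hi hj hij
    rw [← Finset.sum_pair (f := L.get) hij]
    refine le_trans (Finset.sum_le_sum_of_subset_of_nonneg ?_ ?_) (hf b).2
    · intro l hl
      rcases Finset.mem_insert.mp hl with rfl | hl
      · simpa using hi
      · rw [Finset.mem_singleton] at hl
        subst hl
        simpa using hj
    · exact fun l _ _ => (hL _ (List.get_mem L l)).1.le
  rw [Finset.card_le_one]
  intro i hi j hj
  rw [Finset.mem_filter] at hi hj
  obtain ⟨-, hib, hi1⟩ := hi
  obtain ⟨-, hjb, hj1⟩ := hj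
  by_contra hne
  rcases lt_or_gt_of_ne hne with h | h
  · exact absurd (fits i j hib hjb hne)
      (one_lt_add_of_alone k hk L i j h (alone i hi1) (alone j hj1)).not_ge
  · exact absurd (fits j i hjb hib (Ne.symm hne))
      (one_lt_add_of_alone k hk L j i h (alone j hj1) (alone i hi1)).not_ge
end
end

section
/- Let k ≥ 2, let L be an input list, and let 1 ≤ j ≤ k−1. In First Fit's final packing of L, every j-bin except for at most one has level strictly greater than j/(j+1); moreover, every j⁺-bin except for at most one has level strictly greater than j/(j+1). -/
/-!
Every item of a bin `q` opened after a bin `p` was refused by `p` on arrival. If `p` ends with fewer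
than `k` items, the refusal was for lack of space, so the item is larger than the free space of `p`
at that time, which is at least the final free space of `p`. Hence a bin `q` with `m` items has
level greater than `m * (1 - level p)` (`Dominates`), an invariant of First Fit
(`pairwise_ffState`). If moreover `p` has level at most `j / (j + 1)`, its free space is at least
`1 / (j + 1)`, so a later bin with at least `j` items has level greater than `j / (j + 1)`
(`Dominates.level_gt`), and two exceptional bins cannot coexist.
-/

open scoped Classical
noncomputable section

/-- `p` dominates a later bin `q`: if `p` is not full in cardinality, then the level of `q`
exceeds (number of items of `q`) times the free space of `p`. -/
def Dominates (k : ℕ) (p q : ℕ × ℝ) : Prop :=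
  p.1 < k → (q.1 : ℝ) * (1 - p.2) < q.2

/-- An item that `p` cannot receive keeps all later bins dominated by `p`, whichever of them
receives it. -/
lemma dominates_ffUpdate {k : ℕ} {x : ℝ} {p : ℕ × ℝ} (hp : ¬(p.1 < k ∧ p.2 + x ≤ 1))
    (bs : List (ℕ × ℝ)) (h : ∀ q ∈ bs, Dominates k p q) :
    ∀ q ∈ ffUpdate k x bs, Dominates k p q := by
  have hx : p.1 < k → 1 - p.2 < x := fun h1 => by
    by_contra h2
    exact hp ⟨h1, by linarith⟩
  induction bs with
  | nil =>
    intro q hq h1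
    simp only [ffUpdate, List.mem_singleton] at hq
    subst hq
    have := hx h1
    simpa using this
  | cons b bs ih =>
    rw [List.forall_mem_cons] at h
    unfold ffUpdate
    split_ifs with hb
    · rw [List.forall_mem_cons]
      refine ⟨fun h1 => ?_, h.2⟩
      have h2 := hx h1
      have h3 := h.1 h1
      push_cast
      linarith
    · rw [List.forall_mem_cons]
      exact ⟨h.1, ih h.2⟩

lemma pairwise_ffUpdate {k : ℕ} {x : ℝ} (hx : 0 < x) (bs : List (ℕ × ℝ))
    (h : bs.Pairwise (Dominates k)) : (ffUpdate k x bs).Pairwise (Dominates k) := by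
  induction bs with
  | nil => simp [ffUpdate]
  | cons b bs ih =>
    rw [List.pairwise_cons] at h
    unfold ffUpdate
    split_ifs with hb
    · rw [List.pairwise_cons]
      refine ⟨fun q hq h1 => ?_, h.2⟩
      have h2 := h.1 q hq hb.1
      have h3 : (0 : ℝ) ≤ (q.1 : ℝ) * x := by positivity
      -- Receiving an item only shrinks the free space of `b`.
      show (q.1 : ℝ) * (1 - (b.2 + x)) < q.2
      linarith
    · rw [List.pairwise_cons]
      exact ⟨dominates_ffUpdate hb bs h.1, ih h.2⟩

lemma pairwise_ffState (k : ℕ) (L : List ℝ) (hL : ValidInput L) :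
    (ffState k L).Pairwise (Dominates k) := by
  induction L using List.reverseRecOn with
  | nil => simp [ffState]
  | append_singleton L x ih =>
    have h : ffState k (L ++ [x]) = ffUpdate k x (ffState k L) := by simp [ffState]
    rw [h]
    exact pairwise_ffUpdate (hL x (by simp)).1 _ (ih fun y hy => hL y (by simp [hy]))

/-- Of two bins, a later one with at least `j` items has level above `j / (j + 1)` as soon as the
earlier one has fewer than `k` items and level at most `j / (j + 1)`. -/
lemma Dominates.level_gt {k j : ℕ} {p q : ℕ × ℝ} (h : Dominates k p q) (hp : p.1 < k)
    (hp' : p.2 ≤ (j : ℝ) / (j + 1)) (hq : j ≤ q.1) : (j : ℝ) / (j + 1) < q.2 := by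
  have hj : (0 : ℝ) < j + 1 := by positivity
  have h1 : 1 / ((j : ℝ) + 1) ≤ 1 - p.2 := by
    have : (j : ℝ) / (j + 1) + 1 / ((j : ℝ) + 1) = 1 := by field_simp
    linarith
  have hq' : (j : ℝ) ≤ q.1 := by exact_mod_cast hq
  calc (j : ℝ) / (j + 1) = j * (1 / ((j : ℝ) + 1)) := by ring
    _ ≤ q.1 * (1 - p.2) := by gcongr
    _ < q.2 := h hp

/-- For 1 ≤ j ≤ k − 1, in First Fit's final packing of `L` every j-bin
except at most one has level strictly greater than j/(j+1), and every j⁺-bin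
(at least j and at most k−1 items) except at most one has level strictly greater
than j/(j+1). -/
theorem ff_level_bound (k : ℕ) (hk : 2 ≤ k) (L : List ℝ) (hL : ValidInput L)
    (j : ℕ) (hj1 : 1 ≤ j) (hj2 : j ≤ k - 1) :
    ((Finset.range (ffState k L).length).filter (fun b =>
        ((ffState k L).getD b (0, 0)).1 = j ∧
        ((ffState k L).getD b (0, 0)).2 ≤ (j : ℝ) / (j + 1))).card ≤ 1 ∧
    ((Finset.range (ffState k L).length).filter (fun b =>
        j ≤ ((ffState k L).getD b (0, 0)).1 ∧ ((ffState k L).getD b (0, 0)).1 ≤ k - 1 ∧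
        ((ffState k L).getD b (0, 0)).2 ≤ (j : ℝ) / (j + 1))).card ≤ 1 := by
  have hP := pairwise_ffState k L hL
  have key : ((Finset.range (ffState k L).length).filter (fun b =>
      j ≤ ((ffState k L).getD b (0, 0)).1 ∧ ((ffState k L).getD b (0, 0)).1 ≤ k - 1 ∧
      ((ffState k L).getD b (0, 0)).2 ≤ (j : ℝ) / (j + 1))).card ≤ 1 := by
    have no_pair : ∀ a b : ℕ, a < b → b < (ffState k L).length →
        ((ffState k L).getD a (0, 0)).1 ≤ k - 1 →
        ((ffState k L).getD a (0, 0)).2 ≤ (j : ℝ) / (j + 1) →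
        j ≤ ((ffState k L).getD b (0, 0)).1 →
        ((ffState k L).getD b (0, 0)).2 ≤ (j : ℝ) / (j + 1) → False := by
      intro a b hab hb h1 h2 h3 h4
      have ha := hab.trans hb
      rw [List.getD_eq_getElem _ _ ha] at h1 h2
      rw [List.getD_eq_getElem _ _ hb] at h3 h4
      have hD := List.pairwise_iff_getElem.1 hP a b ha hb hab
      exact absurd h4 (not_le.2 (hD.level_gt (by omega) h2 h3))
    rw [Finset.card_le_one]
    intro a ha b hb
    simp only [Finset.mem_filter, Finset.mem_range] at ha hb
    obtain ⟨ha, ha1, ha2, ha3⟩ := ha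
    obtain ⟨hb, hb1, hb2, hb3⟩ := hb
    rcases lt_trichotomy a b with hab | hab | hab
    · exact (no_pair a b hab hb ha2 ha3 hb1 hb3).elim
    · exact hab
    · exact (no_pair b a hab ha hb2 hb3 ha1 ha3).elim
  -- A `j`-bin is in particular a `j⁺`-bin, since `j ≤ k - 1`.
  refine ⟨(Finset.card_le_card fun b hb => ?_).trans key, key⟩
  rw [Finset.mem_filter] at hb ⊢
  exact ⟨hb.1, hb.2.1.ge, hb.2.1.le.trans hj2, hb.2.2⟩
end
end
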